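/- arXiv:2311.01407 — 5 statements merged into one kernel-verified Lean document; each statement's English description precedes it below -/
import Mathlib

section
/- (Berger's inequality, first part.) Let R be an algebraic curvature tensor on E and let K₁, K₂ be real numbers such that −K₁ ≤ R(X,Y,X,Y) ≤ K₂ for every orthonormal pair X, Y. Then for all orthonormal vectors X, Y, Z in E one has |R(X,Z,Y,Z)| ≤ (1/2)(K₁ + K₂). -/
/-!
Polarization in the first and third slots: for `U = (X + Y)/√2` and `V = (X - Y)/√2`, the pairs
`U, Z` and `V, Z` are orthonormal, and by pair symmetry
`R(U,Z,U,Z) - R(V,Z,V,Z) = 2 R(X,Z,Y,Z)`. The left side is a difference of two numbers in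
`[-K₁, K₂]`, so its absolute value is at most `K₁ + K₂`.
-/

open scoped RealInnerProductSpace

theorem orthonormal_pair_iff {E : Type*} [NormedAddCommGroup E] [InnerProductSpace ℝ E]
    (x y : E) : Orthonormal ℝ ![x, y] ↔ ⟪x, x⟫ = 1 ∧ ⟪y, y⟫ = 1 ∧ ⟪x, y⟫ = 0 := by
  rw [orthonormal_iff_ite]
  simp only [Fin.forall_fin_two, Matrix.cons_val_zero, Matrix.cons_val_one, if_true,
    zero_ne_one, one_ne_zero, if_false]
  rw [real_inner_comm x y]
  tauto

/-- **Berger's inequality, first part.** If `R` is an algebraic curvature tensor on a real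
inner product space `E` whose sectional curvatures lie in `[-K₁, K₂]`, then for any
orthonormal vectors `X, Y, Z` one has `|R(X,Z,Y,Z)| ≤ (K₁ + K₂)/2`. -/
theorem berger_inequality_mixed
    {E : Type*} [NormedAddCommGroup E] [InnerProductSpace ℝ E]
    (R : E →ₗ[ℝ] E →ₗ[ℝ] E →ₗ[ℝ] E →ₗ[ℝ] ℝ)
    (hanti₁ : ∀ X Y Z W : E, R X Y Z W = -R Y X Z W)
    (hanti₂ : ∀ X Y Z W : E, R X Y Z W = -R X Y W Z)
    (hpair : ∀ X Y Z W : E, R X Y Z W = R Z W X Y)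
    (hbianchi : ∀ X Y Z W : E, R X Y Z W + R Y Z X W + R Z X Y W = 0)
    (K₁ K₂ : ℝ)
    (hsec : ∀ X Y : E, Orthonormal ℝ ![X, Y] → -K₁ ≤ R X Y X Y ∧ R X Y X Y ≤ K₂)
    (X Y Z : E) (hXYZ : Orthonormal ℝ ![X, Y, Z]) :
    |R X Z Y Z| ≤ (1 / 2) * (K₁ + K₂) := by
  have h := orthonormal_iff_ite.mp hXYZ
  have hXX : ⟪X, X⟫ = 1 := by simpa using h 0 0
  have hYY : ⟪Y, Y⟫ = 1 := by simpa using h 1 1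
  have hZZ : ⟪Z, Z⟫ = 1 := by simpa using h 2 2
  have hXY : ⟪X, Y⟫ = 0 := by simpa using h 0 1
  have hYX : ⟪Y, X⟫ = 0 := by simpa using h 1 0
  have hXZ : ⟪X, Z⟫ = 0 := by simpa using h 0 2
  have hYZ : ⟪Y, Z⟫ = 0 := by simpa using h 1 2
  obtain ⟨c, hc⟩ : ∃ c : ℝ, c * c = 1 / 2 :=
    ⟨√(1 / 2), Real.mul_self_sqrt (by norm_num)⟩
  have hU := hsec (c • (X + Y)) Z <| (orthonormal_pair_iff _ _).mpr <| by
    simp only [inner_add_left, inner_add_right, real_inner_smul_left, real_inner_smul_right,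
      hXX, hYY, hZZ, hXY, hYX, hXZ, hYZ]
    exact ⟨by linear_combination 2 * hc, trivial, by ring⟩
  have hV := hsec (c • (X - Y)) Z <| (orthonormal_pair_iff _ _).mpr <| by
    simp only [inner_sub_left, inner_sub_right, real_inner_smul_left, real_inner_smul_right,
      hXX, hYY, hZZ, hXY, hYX, hXZ, hYZ]
    exact ⟨by linear_combination 2 * hc, trivial, by ring⟩
  have key : R (c • (X + Y)) Z (c • (X + Y)) Z - R (c • (X - Y)) Z (c • (X - Y)) Z
      = 2 * R X Z Y Z := by
    -- With this rewriting, additivity and homogeneity alone expand both terms.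
    have hsub : X - Y = X + (-1 : ℝ) • Y := by rw [neg_one_smul, sub_eq_add_neg]
    rw [hsub]
    simp only [map_add, map_smul, LinearMap.add_apply, LinearMap.smul_apply, smul_eq_mul]
    rw [hpair Y Z X Z]
    linear_combination 4 * R X Z Y Z * hc
  rw [abs_le]
  constructor <;> linarith [hU.1, hU.2, hV.1, hV.2]
end

section
/- (Berger's inequality, second part.) Let R be an algebraic curvature tensor on E and let K₁, K₂ be real numbers such that −K₁ ≤ R(X,Y,X,Y) ≤ K₂ for every orthonormal pair X, Y. Then for all orthonormal vectors X, Y, Z, W in E one has |R(X,Y,Z,W)| ≤ (2/3)(K₁ + K₂). -/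
open scoped RealInnerProductSpace

/-!
Write `K x y = R x y x y`. For orthonormal `X, Y, Z, W` and signs `s, t`, the vectors `X + s Z` and
`Y + t W` are orthogonal of squared length `2`, so `K (X + s Z) (Y + t W)` lies in `[-4 K₁, 4 K₂]`.
The alternating sum `∑ s t K (X + s Z) (Y + t W)` isolates the mixed term
`8 (R X Y Z W + R X W Z Y)`, which gives `|R X Y Z W + R X W Z Y| ≤ K₁ + K₂`.
Applying this bound also with `X` and `Y` exchanged, and using the Bianchi identity, the difference
of the two bounded quantities is `3 R X Y Z W`, whence the factor `2 / 3`.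
-/

section Berger

variable {E : Type*} [NormedAddCommGroup E] [InnerProductSpace ℝ E]

/-- The sectional curvature bounds rescaled to orthogonal vectors of length `√2`. -/
lemma sectional_bound_of_norm_sq_two (R : E →ₗ[ℝ] E →ₗ[ℝ] E →ₗ[ℝ] E →ₗ[ℝ] ℝ) {K₁ K₂ : ℝ}
    (hsec : ∀ X Y : E, Orthonormal ℝ ![X, Y] → -K₁ ≤ R X Y X Y ∧ R X Y X Y ≤ K₂)
    {u v : E} (huv : ⟪u, v⟫ = 0) (hu : ⟪u, u⟫ = 2) (hv : ⟪v, v⟫ = 2) :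
    -(4 * K₁) ≤ R u v u v ∧ R u v u v ≤ 4 * K₂ := by
  obtain ⟨c, hc⟩ : ∃ c : ℝ, c * c = 1 / 2 := ⟨√(1 / 2), Real.mul_self_sqrt (by norm_num)⟩
  have hvu : ⟪v, u⟫ = 0 := by rw [real_inner_comm, huv]
  have ho : Orthonormal ℝ ![c • u, c • v] := by
    rw [orthonormal_iff_ite]
    intro i j
    have inner_smul : ∀ a b : E, ⟪c • a, c • b⟫ = 1 / 2 * ⟪a, b⟫ := by
      intro a b
      rw [real_inner_smul_left, real_inner_smul_right, ← mul_assoc, hc]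
    have uu : ⟪c • u, c • u⟫ = 1 := by rw [inner_smul, hu]; norm_num
    have uv : ⟪c • u, c • v⟫ = 0 := by rw [inner_smul, huv, mul_zero]
    have vu : ⟪c • v, c • u⟫ = 0 := by rw [inner_smul, hvu, mul_zero]
    have vv : ⟪c • v, c • v⟫ = 1 := by rw [inner_smul, hv]; norm_num
    fin_cases i <;> fin_cases j
    exacts [uu, uv, vu, vv]
  have h := hsec _ _ ho
  have e : R (c • u) (c • v) (c • u) (c • v) = (c * c) * (c * c) * R u v u v := by
    simp only [map_smul, LinearMap.smul_apply, smul_eq_mul]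
    ring
  rw [e, hc] at h
  constructor <;> linarith [h.1, h.2]

/-- The polarized bound: the symmetrization of `R X Y Z W` in `Y` and `W` is at most `K₁ + K₂` in
absolute value. -/
lemma abs_symmetrized_le (R : E →ₗ[ℝ] E →ₗ[ℝ] E →ₗ[ℝ] E →ₗ[ℝ] ℝ)
    (hpair : ∀ X Y Z W : E, R X Y Z W = R Z W X Y) {K₁ K₂ : ℝ}
    (hsec : ∀ X Y : E, Orthonormal ℝ ![X, Y] → -K₁ ≤ R X Y X Y ∧ R X Y X Y ≤ K₂)
    {X Y Z W : E} (h : Orthonormal ℝ ![X, Y, Z, W]) :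
    |R X Y Z W + R X W Z Y| ≤ K₁ + K₂ := by
  rw [orthonormal_iff_ite] at h
  have xx : ⟪X, X⟫ = 1 := h 0 0
  have xy : ⟪X, Y⟫ = 0 := h 0 1
  have xz : ⟪X, Z⟫ = 0 := h 0 2
  have xw : ⟪X, W⟫ = 0 := h 0 3
  have yy : ⟪Y, Y⟫ = 1 := h 1 1
  have yw : ⟪Y, W⟫ = 0 := h 1 3
  have zx : ⟪Z, X⟫ = 0 := h 2 0
  have zy : ⟪Z, Y⟫ = 0 := h 2 1
  have zz : ⟪Z, Z⟫ = 1 := h 2 2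
  have zw : ⟪Z, W⟫ = 0 := h 2 3
  have wy : ⟪W, Y⟫ = 0 := h 3 1
  have ww : ⟪W, W⟫ = 1 := h 3 3
  have key : ∀ s t : ℝ, s * s = 1 → t * t = 1 →
      -(4 * K₁) ≤ R (X + s • Z) (Y + t • W) (X + s • Z) (Y + t • W) ∧
        R (X + s • Z) (Y + t • W) (X + s • Z) (Y + t • W) ≤ 4 * K₂ := by
    intro s t hs ht
    apply sectional_bound_of_norm_sq_two R hsec <;>
      simp only [inner_add_left, inner_add_right, real_inner_smul_left, real_inner_smul_right,
        xx, xy, xz, xw, yy, yw, zx, zy, zz, zw, wy, ww] <;>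
      linarith
  have pp := key 1 1 (by norm_num) (by norm_num)
  have pm := key 1 (-1) (by norm_num) (by norm_num)
  have mp := key (-1) 1 (by norm_num) (by norm_num)
  have mm := key (-1) (-1) (by norm_num) (by norm_num)
  simp only [map_add, map_smul, LinearMap.add_apply, LinearMap.smul_apply, smul_eq_mul]
    at pp pm mp mm
  have e₁ := hpair Z W X Y
  have e₂ := hpair Z Y X W
  rw [abs_le]
  constructor <;> linarith [pp.1, pp.2, pm.1, pm.2, mp.1, mp.2, mm.1, mm.2]

end Berger

/-- **Berger's inequality, second part.** If `R` is an algebraic curvature tensor on a real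
inner product space `E` whose sectional curvatures lie in `[-K₁, K₂]`, then for any
orthonormal vectors `X, Y, Z, W` one has `|R(X,Y,Z,W)| ≤ (2/3)(K₁ + K₂)`. -/
theorem berger_inequality_full
    {E : Type*} [NormedAddCommGroup E] [InnerProductSpace ℝ E]
    (R : E →ₗ[ℝ] E →ₗ[ℝ] E →ₗ[ℝ] E →ₗ[ℝ] ℝ)
    (hanti₁ : ∀ X Y Z W : E, R X Y Z W = -R Y X Z W)
    (hanti₂ : ∀ X Y Z W : E, R X Y Z W = -R X Y W Z)
    (hpair : ∀ X Y Z W : E, R X Y Z W = R Z W X Y)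
    (hbianchi : ∀ X Y Z W : E, R X Y Z W + R Y Z X W + R Z X Y W = 0)
    (K₁ K₂ : ℝ)
    (hsec : ∀ X Y : E, Orthonormal ℝ ![X, Y] → -K₁ ≤ R X Y X Y ∧ R X Y X Y ≤ K₂)
    (X Y Z W : E) (hXYZW : Orthonormal ℝ ![X, Y, Z, W]) :
    |R X Y Z W| ≤ (2 / 3) * (K₁ + K₂) := by
  have h₁ := abs_symmetrized_le R hpair hsec hXYZW
  have hswap : Orthonormal ℝ ![Y, X, Z, W] := by
    have h := hXYZW.comp (Equiv.swap (0 : Fin 4) 1) (Equiv.injective _)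
    convert h using 1
    ext i
    fin_cases i <;> rfl
  have h₂ := abs_symmetrized_le R hpair hsec hswap
  have hb := hbianchi X Y Z W
  have e₁ : R X W Z Y = -R Y Z X W := by rw [hpair, hanti₁]
  have e₂ : R Y X Z W = -R X Y Z W := hanti₁ _ _ _ _
  have e₃ : R Y W Z X = R Z X Y W := hpair _ _ _ _
  rw [e₁, abs_le] at h₁
  rw [e₂, e₃, abs_le] at h₂
  rw [abs_le]
  constructor <;> linarith [h₁.1, h₁.2, h₂.1, h₂.2]
end

section
/- (Existence of adapted (B2) bases.) Suppose k ≤ m. Then there exist an orthonormal basis e_1, …, e_m of V and an orthonormal basis e_{m+1}, …, e_{m+k} of the orthogonal complement V^⊥ such that: (1) for every integer r with 2r ≤ k there exist τ_r, ν_r ∈ [0,1] with τ_r² + ν_r² = 1, J e_{m+2r−1} = τ_r e_{2r−1} + ν_r e_{m+2r} and J e_{m+2r} = τ_r e_{2r} − ν_r e_{m+2r−1}; (2) if k is odd then J e_{m+k} = e_k; (3) for every integer s with k + 2s ≤ m one has J e_{k+2s−1} = e_{k+2s}. -/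
open scoped RealInnerProductSpace

/-!
The compression `A = P_W J` of `J` to `W = Vᗮ` is skew-symmetric, so either it vanishes or some
eigenvector of the symmetric operator `A²` gives orthonormal `f₁, f₂ ∈ W` with `A f₁ = ν f₂` and
`A f₂ = -ν f₁` (`exists_skew_pair`). Put `τ = √(1 - ν²)`. If `τ ≠ 0`, the `V`-components of
`J f₁` and `J f₂`, divided by `τ`, are orthonormal vectors `e₁, e₂ ∈ V`. If `τ = 0`, then
`J f₁ = f₂`, so `P_W J : V → W` misses `f₁`; as `dim W ≤ dim V` it has a nontrivial kernel, and a
unit vector `e₁` of this kernel together with `e₂ = J e₁` serves instead. In both cases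
`span {e₁, e₂, f₁, f₂}` is `J`-stable, so its orthogonal complement in `V ⊔ W` is `J`-stable too
(`IsStablePair.peel`), and one continues with `V` and `W` both smaller by two dimensions.

The recursion ends with `dim W = 1`, where `J f ∈ V` for the unit vector `f ∈ W` because `J` is
skew, or with `W = 0`, where `V` is `J`-stable and is exhausted by pairs `e, J e`.
-/

namespace AdaptedB2

variable {E : Type*} [NormedAddCommGroup E] [InnerProductSpace ℝ E]

/-! ### Orthonormal sequences -/

/-- The sequence `x, v 0, v 1, …`. -/
def cons (x : E) (v : ℕ → E) : ℕ → E
  | 0 => x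
  | i + 1 => v i

/-- The first `m` terms of `v` are orthonormal vectors of `V`; later terms are unconstrained. -/
def OrthoSeq (V : Submodule ℝ E) (m : ℕ) (v : ℕ → E) : Prop :=
  (∀ i < m, v i ∈ V) ∧ ∀ i < m, ∀ j < m, ⟪v i, v j⟫ = if i = j then 1 else 0

lemma OrthoSeq.cons {V V' : Submodule ℝ E} {m : ℕ} {v : ℕ → E} (h : OrthoSeq V m v)
    (hV : V ≤ V') {x : E} (hx : x ∈ V') (hxx : ⟪x, x⟫ = 1) (hxV : ∀ y ∈ V, ⟪x, y⟫ = 0) :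
    OrthoSeq V' (m + 1) (cons x v) := by
  refine ⟨?_, ?_⟩
  · rintro (_ | i) hi
    · exact hx
    · exact hV (h.1 i (by omega))
  · rintro (_ | i) hi (_ | j) hj
    · simpa [AdaptedB2.cons] using hxx
    · simpa [AdaptedB2.cons] using hxV _ (h.1 j (by omega))
    · simpa [AdaptedB2.cons, real_inner_comm] using hxV _ (h.1 i (by omega))
    · simpa [AdaptedB2.cons] using h.2 i (by omega) j (by omega)

lemma OrthoSeq.cons_cons {V : Submodule ℝ E} {m : ℕ} {v : ℕ → E} {x y : E}
    (h : OrthoSeq ((Submodule.span ℝ {x, y})ᗮ ⊓ V) m v)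
    (hx : x ∈ V) (hy : y ∈ V) (hxx : ⟪x, x⟫ = 1) (hyy : ⟪y, y⟫ = 1) (hxy : ⟪x, y⟫ = 0) :
    OrthoSeq V (m + 2) (AdaptedB2.cons x (AdaptedB2.cons y v)) := by
  have h1 : OrthoSeq ((Submodule.span ℝ {x})ᗮ ⊓ V) (m + 1) (AdaptedB2.cons y v) := by
    refine h.cons ?_ ⟨?_, hy⟩ hyy ?_
    · exact inf_le_inf_right _ (Submodule.orthogonal_le (Submodule.span_mono (by simp)))
    · rwa [SetLike.mem_coe, Submodule.mem_orthogonal_singleton_iff_inner_right]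
    · exact fun z hz => (Submodule.mem_orthogonal _ _).1 hz.1 y (Submodule.subset_span (by simp))
  exact h1.cons inf_le_right hx hxx
    fun z hz => (Submodule.mem_orthogonal _ _).1 hz.1 x (Submodule.subset_span (by simp))

/-! ### Stable pairs of subspaces -/

/-- `V` and `W` are orthogonal and their sum is `J`-stable. -/
def IsStablePair (J : E →ₗ[ℝ] E) (V W : Submodule ℝ E) : Prop :=
  (∀ x ∈ V, ∀ y ∈ W, ⟪x, y⟫ = 0) ∧ ∀ x ∈ V ⊔ W, J x ∈ V ⊔ W

/-- The adapted basis, indexed from `0`, with its part `v` in `V` and its part `w` in `W` kept as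
two separate sequences. -/
def Adapted (J : E →ₗ[ℝ] E) (V W : Submodule ℝ E) (m k : ℕ) (v w : ℕ → E) : Prop :=
  OrthoSeq V m v ∧ OrthoSeq W k w ∧
  (∀ r, 2 * r + 1 < k → ∃ τ ν : ℝ, 0 ≤ τ ∧ τ ≤ 1 ∧ 0 ≤ ν ∧ ν ≤ 1 ∧ τ ^ 2 + ν ^ 2 = 1 ∧
    J (w (2 * r)) = τ • v (2 * r) + ν • w (2 * r + 1) ∧
    J (w (2 * r + 1)) = τ • v (2 * r + 1) - ν • w (2 * r)) ∧
  (∀ j, k = 2 * j + 1 → J (w (2 * j)) = v (2 * j)) ∧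
  (∀ s, k + 2 * s + 1 < m → J (v (k + 2 * s)) = v (k + 2 * s + 1))

section

variable {J : E →ₗ[ℝ] E} {V W : Submodule ℝ E}

lemma inner_map_left (hJorth : ∀ x y : E, ⟪J x, J y⟫ = ⟪x, y⟫) (hJsq : ∀ x : E, J (J x) = -x)
    (x y : E) : ⟪J x, y⟫ = -⟪x, J y⟫ := by
  rw [← hJorth x (J y), hJsq, inner_neg_right, neg_neg]

lemma IsStablePair.mem_left (h : IsStablePair J V W) {z : E} (hz : z ∈ V ⊔ W)
    (hzW : ∀ y ∈ W, ⟪z, y⟫ = 0) : z ∈ V := by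
  obtain ⟨a, ha, b, hb, rfl⟩ := Submodule.mem_sup.1 hz
  have h1 := hzW b hb
  rw [inner_add_left, h.1 a ha b hb, zero_add, inner_self_eq_zero] at h1
  simpa [h1] using ha

/-- Since `J` is skew-symmetric, removing orthogonally a `J`-stable `A ⊔ B` with `A ≤ V` and
`B ≤ W` leaves a `J`-stable pair. -/
lemma IsStablePair.peel (hJ : ∀ x y : E, ⟪J x, y⟫ = -⟪x, J y⟫)
    (h : IsStablePair J V W) {A B : Submodule ℝ E} (hA : A ≤ V) (hB : B ≤ W)
    (hAJ : ∀ x ∈ A, J x ∈ A ⊔ B) (hBJ : ∀ x ∈ B, J x ∈ A ⊔ B) :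
    IsStablePair J (Aᗮ ⊓ V) (Bᗮ ⊓ W) := by
  refine ⟨fun x hx y hy => h.1 x hx.2 y hy.2, fun x hx => ?_⟩
  have hperp : ∀ z ∈ A ⊔ B, ⟪z, x⟫ = 0 := by
    intro z hz
    obtain ⟨p, hp, q, hq, rfl⟩ := Submodule.mem_sup.1 hx
    obtain ⟨a, ha, b, hb, rfl⟩ := Submodule.mem_sup.1 hz
    have h1 := (Submodule.mem_orthogonal _ _).1 hp.1 a ha
    have h2 := (Submodule.mem_orthogonal _ _).1 hq.1 b hb
    have h3 := h.1 a (hA ha) q hq.2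
    have h4 := h.1 p hp.2 b (hB hb)
    rw [real_inner_comm] at h4
    simp [inner_add_left, inner_add_right, h1, h2, h3, h4]
  have hJx := h.2 x ((sup_le_sup inf_le_right inf_le_right : Aᗮ ⊓ V ⊔ Bᗮ ⊓ W ≤ V ⊔ W) hx)
  obtain ⟨a, ha, b, hb, hab⟩ := Submodule.mem_sup.1 hJx
  rw [← hab]
  refine Submodule.add_mem_sup ⟨?_, ha⟩ ⟨?_, hb⟩
  · refine (Submodule.mem_orthogonal _ _).2 fun y hy => ?_
    have h1 : ⟪y, a + b⟫ = 0 := by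
      rw [hab, ← neg_eq_zero, ← hJ]
      exact hperp _ (hAJ y hy)
    rwa [inner_add_right, h.1 y (hA hy) b hb, add_zero] at h1
  · refine (Submodule.mem_orthogonal _ _).2 fun y hy => ?_
    have h1 : ⟪y, a + b⟫ = 0 := by
      rw [hab, ← neg_eq_zero, ← hJ]
      exact hperp _ (hBJ y hy)
    rwa [inner_add_right, real_inner_comm, h.1 a ha y (hB hy), zero_add] at h1

lemma finrank_span_pair {x y : E} (hxx : ⟪x, x⟫ = 1) (hyy : ⟪y, y⟫ = 1) (hxy : ⟪x, y⟫ = 0) :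
    Module.finrank ℝ (Submodule.span ℝ {x, y}) = 2 := by
  have ho : Orthonormal ℝ ![x, y] := by
    rw [orthonormal_iff_ite]
    intro i j
    fin_cases i <;> fin_cases j
    · simpa using hxx
    · simpa using hxy
    · simpa [real_inner_comm] using hxy
    · simpa using hyy
  have := finrank_span_eq_card ho.linearIndependent
  rwa [Matrix.range_cons_cons_empty, Fintype.card_fin] at this

lemma exists_unit [FiniteDimensional ℝ E] (h : 0 < Module.finrank ℝ V) :
    ∃ x ∈ V, ⟪x, x⟫ = 1 := by
  have : V ≠ ⊥ := by
    rintro rfl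
    simp at h
  obtain ⟨x, hx, hx0⟩ := V.exists_mem_ne_zero_of_ne_bot this
  refine ⟨‖x‖⁻¹ • x, V.smul_mem _ hx, ?_⟩
  have : ‖x‖ ≠ 0 := norm_ne_zero_iff.2 hx0
  rw [inner_smul_left, inner_smul_right, real_inner_self_eq_norm_sq]
  simp
  field_simp

/-! ### Skew-symmetric operators and the compression of `J` -/

/-- A two-dimensional block of the normal form of a skew-symmetric operator. -/
lemma exists_skew_pair {F : Type*} [NormedAddCommGroup F] [InnerProductSpace ℝ F]
    [FiniteDimensional ℝ F] (A : F →ₗ[ℝ] F) (hA : ∀ x y, ⟪A x, y⟫ = -⟪x, A y⟫)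
    (hF : 2 ≤ Module.finrank ℝ F) :
    ∃ (x y : F) (ν : ℝ), ⟪x, x⟫ = 1 ∧ ⟪y, y⟫ = 1 ∧ ⟪x, y⟫ = 0 ∧ 0 ≤ ν ∧
      A x = ν • y ∧ A y = -(ν • x) := by
  by_cases hA0 : A = 0
  · have ho := orthonormal_iff_ite.1 (stdOrthonormalBasis ℝ F).orthonormal
    refine ⟨stdOrthonormalBasis ℝ F ⟨0, by omega⟩, stdOrthonormalBasis ℝ F ⟨1, by omega⟩, 0,
      ?_, ?_, ?_, le_rfl, ?_, ?_⟩
    · rw [ho]; simp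
    · rw [ho]; simp
    · rw [ho]; simp
    · simp [hA0]
    · simp [hA0]
  · have hsym : (A ∘ₗ A).IsSymmetric := by
      intro x y
      simp [hA]
    let b := hsym.eigenvectorBasis rfl
    have hex : ∃ i, A (b i) ≠ 0 := by
      by_contra! hcon
      exact hA0 (b.toBasis.ext fun i => by simpa using hcon i)
    obtain ⟨i, hi⟩ := hex
    have hbb : ⟪b i, b i⟫ = 1 := by
      rw [real_inner_self_eq_norm_sq, b.orthonormal.1 i]; norm_num
    set l : ℝ := hsym.eigenvalues rfl i with hl
    have hAA : A (A (b i)) = l • b i := hsym.apply_eigenvectorBasis rfl i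
    have hn : ‖A (b i)‖ ≠ 0 := norm_ne_zero_iff.2 hi
    have hll : l = -‖A (b i)‖ ^ 2 := by
      have := hA (b i) (A (b i))
      rw [hAA, inner_smul_right, hbb, real_inner_self_eq_norm_sq] at this
      linarith
    have hx0 : ⟪b i, A (b i)⟫ = 0 := by
      have := hA (b i) (b i)
      rw [real_inner_comm] at this
      linarith
    refine ⟨b i, ‖A (b i)‖⁻¹ • A (b i), ‖A (b i)‖, hbb, ?_, ?_, norm_nonneg _, ?_, ?_⟩
    · rw [inner_smul_left, inner_smul_right, real_inner_self_eq_norm_sq]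
      simp
      field_simp
    · rw [inner_smul_right, hx0, mul_zero]
    · rw [smul_smul, mul_inv_cancel₀ hn, one_smul]
    · rw [map_smul, hAA, smul_smul, hll, ← neg_smul]
      congr 1
      field_simp

lemma exists_compression_pair [FiniteDimensional ℝ E] (hJ : ∀ x y : E, ⟪J x, y⟫ = -⟪x, J y⟫)
    (h : IsStablePair J V W) (hW : 2 ≤ Module.finrank ℝ W) :
    ∃ x ∈ W, ∃ y ∈ W, ∃ ν : ℝ, ⟪x, x⟫ = 1 ∧ ⟪y, y⟫ = 1 ∧ ⟪x, y⟫ = 0 ∧ 0 ≤ ν ∧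
      J x - ν • y ∈ V ∧ J y + ν • x ∈ V := by
  let A : W →ₗ[ℝ] W := W.orthogonalProjectionOnto.toLinearMap ∘ₗ J ∘ₗ W.subtype
  have hPl : ∀ (z : E) (y : W), ⟪W.orthogonalProjectionOnto z, y⟫ = ⟪z, (y : E)⟫ := fun z y =>
    Submodule.inner_orthogonalProjectionOnto_eq_of_mem_right y z
  have hAl : ∀ x y : W, ⟪A x, y⟫ = ⟪J x, (y : E)⟫ := fun x y => hPl _ _
  have hA : ∀ x y : W, ⟪A x, y⟫ = -⟪x, A y⟫ := by
    intro x y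
    rw [hAl, real_inner_comm _ x, hAl, hJ, real_inner_comm]
  have hV : ∀ x : W, J x - (A x : E) ∈ V := by
    intro x
    refine h.mem_left (sub_mem (h.2 _ (Submodule.mem_sup_right x.2))
      (Submodule.mem_sup_right (A x).2)) fun y hy => ?_
    have := hAl x ⟨y, hy⟩
    rw [Submodule.coe_inner] at this
    rw [inner_sub_left, this, sub_self]
  obtain ⟨x, y, ν, hxx, hyy, hxy, hν, hx, hy⟩ := exists_skew_pair A hA hW
  refine ⟨x, x.2, y, y.2, ν, hxx, hyy, hxy, hν, ?_, ?_⟩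
  · simpa [hx] using hV x
  · simpa [hy] using hV y

/-- If `J` maps some unit vector `x ∈ W` into `W`, then `P_W J : V → W` misses `x`; hence it has
a kernel, consisting of vectors of `V` that `J` maps into `V`. -/
lemma exists_unit_map_mem [FiniteDimensional ℝ E] (hJ : ∀ x y : E, ⟪J x, y⟫ = -⟪x, J y⟫)
    (h : IsStablePair J V W) (hd : Module.finrank ℝ W ≤ Module.finrank ℝ V) {x : E}
    (hxW : x ∈ W) (hxx : ⟪x, x⟫ = 1) (hJx : J x ∈ W) :
    ∃ z ∈ V, ⟪z, z⟫ = 1 ∧ J z ∈ V := by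
  let L : V →ₗ[ℝ] W := W.orthogonalProjectionOnto.toLinearMap ∘ₗ J ∘ₗ V.subtype
  have hLl : ∀ (v : V) (y : W), ⟪L v, y⟫ = ⟪J v, (y : E)⟫ := fun v y =>
    Submodule.inner_orthogonalProjectionOnto_eq_of_mem_right y _
  have hker : LinearMap.ker L ≠ ⊥ := by
    intro hbot
    have hr : LinearMap.range L = ⊤ := by
      refine Submodule.eq_top_of_finrank_eq (le_antisymm (Submodule.finrank_le _) ?_)
      rwa [LinearMap.finrank_range_of_inj (LinearMap.ker_eq_bot.1 hbot)]
    obtain ⟨v, hv⟩ := LinearMap.range_eq_top.1 hr ⟨x, hxW⟩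
    have h1 := hLl v ⟨x, hxW⟩
    rw [hv, Submodule.coe_inner, hxx, hJ, h.1 v v.2 _ hJx] at h1
    norm_num at h1
  have hpos : 0 < Module.finrank ℝ ((LinearMap.ker L).map V.subtype) := by
    rw [Submodule.finrank_map_subtype_eq]
    exact Nat.pos_of_ne_zero fun h0 => hker (Submodule.finrank_eq_zero.1 h0)
  obtain ⟨z, hz, hzz⟩ := exists_unit hpos
  obtain ⟨v, hv, rfl⟩ := hz
  refine ⟨_, v.2, hzz, h.mem_left (h.2 _ (Submodule.mem_sup_left v.2)) fun y hy => ?_⟩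
  have h1 := hLl v ⟨y, hy⟩
  have hv' : L v = 0 := hv
  rw [hv', inner_zero_left] at h1
  exact h1.symm

/-- The quadruple removed in one step of the recursion. The formulas for `J f₁` and `J f₂` and the
last two conditions together say that `span {e₁, e₂, f₁, f₂}` is `J`-stable. -/
lemma exists_block [FiniteDimensional ℝ E] (hJorth : ∀ x y : E, ⟪J x, J y⟫ = ⟪x, y⟫)
    (hJsq : ∀ x : E, J (J x) = -x) (h : IsStablePair J V W)
    (hW : 2 ≤ Module.finrank ℝ W) (hd : Module.finrank ℝ W ≤ Module.finrank ℝ V) :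
    ∃ e₁ ∈ V, ∃ e₂ ∈ V, ∃ f₁ ∈ W, ∃ f₂ ∈ W, ∃ τ ν : ℝ,
      ⟪e₁, e₁⟫ = 1 ∧ ⟪e₂, e₂⟫ = 1 ∧ ⟪e₁, e₂⟫ = 0 ∧
      ⟪f₁, f₁⟫ = 1 ∧ ⟪f₂, f₂⟫ = 1 ∧ ⟪f₁, f₂⟫ = 0 ∧
      0 ≤ τ ∧ 0 ≤ ν ∧ τ ^ 2 + ν ^ 2 = 1 ∧
      J f₁ = τ • e₁ + ν • f₂ ∧ J f₂ = τ • e₂ - ν • f₁ ∧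
      (∃ a b : ℝ, J e₁ = a • e₂ + b • f₁) ∧ (∃ a b : ℝ, J e₂ = a • e₁ + b • f₂) := by
  have hJ := inner_map_left hJorth hJsq
  obtain ⟨x, hx, y, hy, ν, hxx, hyy, hxy, hν, hxV, hyV⟩ := exists_compression_pair hJ h hW
  have hyx : ⟪y, x⟫ = 0 := by rw [real_inner_comm, hxy]
  have hJxy : ⟪J x, y⟫ = ν := by
    have := h.1 _ hxV y hy
    rw [inner_sub_left, inner_smul_left, hyy] at this
    simp at this
    linarith
  have hxJy : ⟪x, J y⟫ = -ν := by linarith [hJ x y]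
  have hJyx : ⟪J y, x⟫ = -ν := by rw [real_inner_comm, hxJy]
  have hyJx : ⟪y, J x⟫ = ν := by rw [real_inner_comm, hJxy]
  have hJxx : ⟪J x, x⟫ = 0 := by linarith [hJ x x, real_inner_comm x (J x)]
  have hJyy : ⟪J y, y⟫ = 0 := by linarith [hJ y y, real_inner_comm y (J y)]
  have hxJx : ⟪x, J x⟫ = 0 := by rw [real_inner_comm, hJxx]
  have hyJy : ⟪y, J y⟫ = 0 := by rw [real_inner_comm, hJyy]
  have n1 : ⟪J x - ν • y, J x - ν • y⟫ = 1 - ν ^ 2 := by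
    simp only [inner_sub_left, inner_sub_right, real_inner_smul_left, real_inner_smul_right,
      hJorth, hxx, hyy, hJxy, hyJx]
    ring
  have n2 : ⟪J y + ν • x, J y + ν • x⟫ = 1 - ν ^ 2 := by
    simp only [inner_add_left, inner_add_right, real_inner_smul_left, real_inner_smul_right,
      hJorth, hxx, hyy, hJyx, hxJy]
    ring
  have n3 : ⟪J x - ν • y, J y + ν • x⟫ = 0 := by
    simp only [inner_add_right, inner_sub_left, real_inner_smul_left, real_inner_smul_right,
      hJorth, hxy, hyx, hJxx, hyJy]
    ring
  have hν1 : 0 ≤ 1 - ν ^ 2 := n1 ▸ real_inner_self_nonneg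
  set τ := √(1 - ν ^ 2) with hτ
  have hτ2 : τ ^ 2 = 1 - ν ^ 2 := Real.sq_sqrt hν1
  by_cases hτ0 : τ = 0
  · have hν' : ν = 1 := by
      rw [hτ0] at hτ2
      nlinarith
    subst hν'
    norm_num at n1 n2
    have hJx : J x = y := sub_eq_zero.1 n1
    have hJy : J y = -x := eq_neg_of_add_eq_zero_left n2
    obtain ⟨z, hz, hzz, hJz⟩ := exists_unit_map_mem hJ h hd hx hxx (hJx ▸ hy)
    refine ⟨z, hz, J z, hJz, x, hx, y, hy, 0, 1, hzz, by rw [hJorth, hzz], ?_, hxx, hyy, hxy,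
      le_rfl, zero_le_one, by norm_num, by simp [hJx], by simp [hJy], ⟨1, 0, by simp⟩,
      ⟨-1, 0, by simp [hJsq]⟩⟩
    linarith [hJ z z, real_inner_comm z (J z)]
  · have e1 : J x = τ • (τ⁻¹ • (J x - ν • y)) + ν • y := by
      rw [smul_smul, mul_inv_cancel₀ hτ0, one_smul, sub_add_cancel]
    have e2 : J y = τ • (τ⁻¹ • (J y + ν • x)) - ν • x := by
      rw [smul_smul, mul_inv_cancel₀ hτ0, one_smul, add_sub_cancel_right]
    refine ⟨τ⁻¹ • (J x - ν • y), V.smul_mem _ hxV, τ⁻¹ • (J y + ν • x), V.smul_mem _ hyV,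
      x, hx, y, hy, τ, ν, ?_, ?_, ?_, hxx, hyy, hxy, Real.sqrt_nonneg _, hν, by linarith,
      e1, e2, ⟨-ν, -τ, ?_⟩, ⟨ν, -τ, ?_⟩⟩
    · rw [real_inner_smul_left, real_inner_smul_right, n1, ← hτ2]
      field_simp
    · rw [real_inner_smul_left, real_inner_smul_right, n2, ← hτ2]
      field_simp
    · rw [real_inner_smul_left, real_inner_smul_right, n3]
      simp
    · have hc : τ⁻¹ * (1 - ν ^ 2) = τ := by rw [← hτ2]; field_simp
      simp only [map_smul, map_sub, hJsq]
      match_scalars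
      all_goals first | ring1 | linear_combination -hc
    · have hc : τ⁻¹ * (1 - ν ^ 2) = τ := by rw [← hτ2]; field_simp
      simp only [map_smul, map_add, hJsq]
      match_scalars
      all_goals first | ring1 | linear_combination -hc

/-! ### Recursion on the dimensions -/

lemma map_span_le {s : Set E} {S : Submodule ℝ E} (h : ∀ x ∈ s, J x ∈ S) :
    ∀ x ∈ Submodule.span ℝ s, J x ∈ S :=
  fun _ hx => (Submodule.span_le (p := S.comap J)).2 h hx

/-- The case `W = 0`, where `J` maps `V` to itself. -/
lemma exists_adapted_zero [FiniteDimensional ℝ E] (hJorth : ∀ x y : E, ⟪J x, J y⟫ = ⟪x, y⟫)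
    (hJsq : ∀ x : E, J (J x) = -x) (m : ℕ) :
    ∀ V : Submodule ℝ E, IsStablePair J V ⊥ → Module.finrank ℝ V = m →
      ∃ v w : ℕ → E, Adapted J V ⊥ m 0 v w := by
  have hJ := inner_map_left hJorth hJsq
  induction m using Nat.strong_induction_on with
  | _ m ih =>
  intro V h hV
  rcases Nat.eq_zero_or_pos m with rfl | hm
  · exact ⟨0, 0, by simp [Adapted, OrthoSeq]⟩
  obtain ⟨x, hx, hxx⟩ := exists_unit (hV ▸ hm)
  have hJx : J x ∈ V := by simpa using h.2 x (Submodule.mem_sup_left hx)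
  have hxJ : ⟪x, J x⟫ = 0 := by linarith [hJ x x, real_inner_comm x (J x)]
  have hJJ : ⟪J x, J x⟫ = 1 := by rw [hJorth, hxx]
  have hle : Submodule.span ℝ {x, J x} ≤ V := by
    rw [Submodule.span_le]
    rintro _ (rfl | rfl) <;> assumption
  have hdim := Submodule.finrank_add_inf_finrank_orthogonal hle
  rw [finrank_span_pair hxx hJJ hxJ, hV] at hdim
  have hp := h.peel hJ hle (le_refl ⊥) (map_span_le (by
    rintro _ (rfl | rfl)
    · exact Submodule.mem_sup_left (Submodule.subset_span (by simp))
    · rw [hJsq]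
      exact Submodule.mem_sup_left (neg_mem (Submodule.subset_span (by simp)))))
    (by simp)
  rw [inf_bot_eq] at hp
  obtain ⟨m, rfl⟩ : ∃ m', m = m' + 2 := ⟨m - 2, by omega⟩
  obtain ⟨v, w, hv, -, -, -, hs⟩ := ih m (by omega) _ hp (by omega)
  refine ⟨cons x (cons (J x) v), 0, hv.cons_cons hx hJx hxx hJJ hxJ, by simp [OrthoSeq],
    by simp, by simp, ?_⟩
  rintro (_ | s) hsm
  · rfl
  · have := hs s (by omega)
    rw [Nat.zero_add] at this ⊢
    exact this

lemma exists_adapted [FiniteDimensional ℝ E] (hJorth : ∀ x y : E, ⟪J x, J y⟫ = ⟪x, y⟫)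
    (hJsq : ∀ x : E, J (J x) = -x) (k : ℕ) :
    ∀ (m : ℕ) (V W : Submodule ℝ E), IsStablePair J V W → Module.finrank ℝ V = m →
      Module.finrank ℝ W = k → k ≤ m → ∃ v w : ℕ → E, Adapted J V W m k v w := by
  have hJ := inner_map_left hJorth hJsq
  induction k using Nat.twoStepInduction with
  | zero =>
    intro m V W h hV hW _
    obtain rfl := Submodule.finrank_eq_zero.1 hW
    exact exists_adapted_zero hJorth hJsq m V h hV
  | one =>
    intro m V W h hV hW hm
    obtain ⟨x, hx, hxx⟩ := exists_unit (V := W) (by omega)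
    have hx0 : x ≠ 0 := by
      rintro rfl
      simp at hxx
    have hJJ : ⟪J x, J x⟫ = 1 := by rw [hJorth, hxx]
    have hleW : Submodule.span ℝ {x} ≤ W := by simpa using hx
    have hspan : Submodule.span ℝ {x} = W :=
      Submodule.eq_of_le_of_finrank_eq hleW (by rw [finrank_span_singleton hx0, hW])
    have hJx : J x ∈ V := by
      refine h.mem_left (h.2 _ (Submodule.mem_sup_right hx)) fun y hy => ?_
      rw [← hspan] at hy
      obtain ⟨c, rfl⟩ := Submodule.mem_span_singleton.1 hy
      have : ⟪J x, x⟫ = 0 := by linarith [hJ x x, real_inner_comm x (J x)]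
      rw [inner_smul_right, this, mul_zero]
    have hJx0 : J x ≠ 0 := by
      intro h0
      simp [h0] at hJJ
    have hle : Submodule.span ℝ {J x} ≤ V := by simpa using hJx
    have hdim := Submodule.finrank_add_inf_finrank_orthogonal hle
    rw [finrank_span_singleton hJx0, hV] at hdim
    have hp := h.peel hJ hle hleW (map_span_le (by
      rintro _ rfl
      rw [hJsq]
      exact Submodule.mem_sup_right (neg_mem (Submodule.subset_span (by simp)))))
      (map_span_le (by
      rintro _ rfl
      exact Submodule.mem_sup_left (Submodule.subset_span (by simp))))
    have hbot : (Submodule.span ℝ {x})ᗮ ⊓ W = ⊥ := by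
      rw [hspan, inf_comm, Submodule.inf_orthogonal_eq_bot]
    rw [hbot] at hp
    obtain ⟨m, rfl⟩ : ∃ m', m = m' + 1 := ⟨m - 1, by omega⟩
    obtain ⟨v, w, hv, -, -, -, hs⟩ := exists_adapted_zero hJorth hJsq m _ hp (by omega)
    refine ⟨cons (J x) v, cons x 0, hv.cons inf_le_right hJx hJJ ?_, ?_, ?_, ?_, ?_⟩
    · exact fun z hz => (Submodule.mem_orthogonal _ _).1 hz.1 _ (Submodule.subset_span rfl)
    · exact OrthoSeq.cons (V := ⊥) (by simp [OrthoSeq]) bot_le hx hxx (by simp)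
    · intro r hr
      omega
    · intro j hj
      obtain rfl : j = 0 := by omega
      rfl
    · intro s hsm
      have := hs s (by omega)
      rw [Nat.zero_add] at this
      rw [Nat.add_comm 1]
      exact this
  | more k ih _ =>
    intro m V W h hV hW hm
    obtain ⟨e₁, he₁, e₂, he₂, f₁, hf₁, f₂, hf₂, τ, ν, he11, he22, he12, hf11, hf22, hf12,
      hτ, hν, hτν, hJf₁, hJf₂, ⟨a, b, hJe₁⟩, ⟨c, d, hJe₂⟩⟩ :=
      exists_block hJorth hJsq h (by omega) (by omega)
    have hleV : Submodule.span ℝ {e₁, e₂} ≤ V := by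
      rw [Submodule.span_le]
      rintro _ (rfl | rfl) <;> assumption
    have hleW : Submodule.span ℝ {f₁, f₂} ≤ W := by
      rw [Submodule.span_le]
      rintro _ (rfl | rfl) <;> assumption
    have hdV := Submodule.finrank_add_inf_finrank_orthogonal hleV
    have hdW := Submodule.finrank_add_inf_finrank_orthogonal hleW
    rw [finrank_span_pair he11 he22 he12, hV] at hdV
    rw [finrank_span_pair hf11 hf22 hf12, hW] at hdW
    have m1 : e₁ ∈ Submodule.span ℝ {e₁, e₂} := Submodule.subset_span (by simp)
    have m2 : e₂ ∈ Submodule.span ℝ {e₁, e₂} := Submodule.subset_span (by simp)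
    have m3 : f₁ ∈ Submodule.span ℝ {f₁, f₂} := Submodule.subset_span (by simp)
    have m4 : f₂ ∈ Submodule.span ℝ {f₁, f₂} := Submodule.subset_span (by simp)
    have hp := h.peel hJ hleV hleW (map_span_le (by
      rintro _ (rfl | rfl)
      · rw [hJe₁]
        exact Submodule.add_mem_sup (Submodule.smul_mem _ _ m2) (Submodule.smul_mem _ _ m3)
      · rw [hJe₂]
        exact Submodule.add_mem_sup (Submodule.smul_mem _ _ m1) (Submodule.smul_mem _ _ m4)))
      (map_span_le (by
      rintro _ (rfl | rfl)
      · rw [hJf₁]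
        exact Submodule.add_mem_sup (Submodule.smul_mem _ _ m1) (Submodule.smul_mem _ _ m4)
      · rw [hJf₂, sub_eq_add_neg]
        exact Submodule.add_mem_sup (Submodule.smul_mem _ _ m2)
          (neg_mem (Submodule.smul_mem _ _ m3))))
    obtain ⟨m, rfl⟩ : ∃ m', m = m' + 2 := ⟨m - 2, by omega⟩
    obtain ⟨v, w, hv, hw, hr, ho, hs⟩ := ih m _ _ hp (by omega) (by omega) (by omega)
    refine ⟨cons e₁ (cons e₂ v), cons f₁ (cons f₂ w), hv.cons_cons he₁ he₂ he11 he22 he12,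
      hw.cons_cons hf₁ hf₂ hf11 hf22 hf12, ?_, ?_, ?_⟩
    · rintro (_ | r) hrk
      · exact ⟨τ, ν, hτ, by nlinarith, hν, by nlinarith, hτν, hJf₁, hJf₂⟩
      · exact hr r (by omega)
    · rintro (_ | j) hj
      · omega
      · exact ho j (by omega)
    · intro s hsm
      have := hs s (by omega)
      rw [show k + 2 + 2 * s = k + 2 * s + 2 by omega]
      exact this

end

end AdaptedB2

/-! ### The basis indexed from `1` -/

/-- **Existence of adapted (B2) bases.** Let `E` be a real inner product space of dimension
`2n` with an orthogonal complex structure `J`, let `V ⊆ E` be a subspace of dimension `m`,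
and set `k = 2n - m`. If `k ≤ m`, then there are orthonormal vectors `e_1, …, e_m` in `V`
and `e_{m+1}, …, e_{m+k}` in `V^⊥` (jointly orthonormal) adapted to `J` as in (1)–(3). -/
theorem exists_adapted_B2_basis
    {E : Type*} [NormedAddCommGroup E] [InnerProductSpace ℝ E] [FiniteDimensional ℝ E]
    (J : E →ₗ[ℝ] E)
    (hJorth : ∀ x y : E, ⟪J x, J y⟫ = ⟪x, y⟫)
    (hJsq : ∀ x : E, J (J x) = -x)
    (n m k : ℕ) (hE : Module.finrank ℝ E = 2 * n)
    (V : Submodule ℝ E) (hV : Module.finrank ℝ V = m)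
    (hk : k = 2 * n - m) (hkm : k ≤ m) :
    ∃ e : ℕ → E,
      (∀ a ∈ Finset.Icc 1 (m + k), ∀ b ∈ Finset.Icc 1 (m + k),
        ⟪e a, e b⟫ = if a = b then 1 else 0)
      ∧ (∀ a ∈ Finset.Icc 1 m, e a ∈ V)
      ∧ (∀ a ∈ Finset.Icc (m + 1) (m + k), e a ∈ Vᗮ)
      ∧ (∀ r : ℕ, 1 ≤ r → 2 * r ≤ k →
          ∃ τ ν : ℝ, 0 ≤ τ ∧ τ ≤ 1 ∧ 0 ≤ ν ∧ ν ≤ 1 ∧ τ ^ 2 + ν ^ 2 = 1 ∧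
            J (e (m + 2 * r - 1)) = τ • e (2 * r - 1) + ν • e (m + 2 * r) ∧
            J (e (m + 2 * r)) = τ • e (2 * r) - ν • e (m + 2 * r - 1))
      ∧ (Odd k → J (e (m + k)) = e k)
      ∧ (∀ s : ℕ, 1 ≤ s → k + 2 * s ≤ m → J (e (k + 2 * s - 1)) = e (k + 2 * s)) := by
  obtain ⟨v, w, ⟨hvV, hvo⟩, ⟨hwW, hwo⟩, hr, ho, hs⟩ :=
    AdaptedB2.exists_adapted hJorth hJsq k m V Vᗮ
    ⟨fun x hx y hy => (Submodule.mem_orthogonal _ _).1 hy x hx,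
      fun x _ => by rw [Submodule.sup_orthogonal_of_hasOrthogonalProjection]; trivial⟩
    hV (by have := V.finrank_add_finrank_orthogonal; omega) hkm
  have hvw : ∀ i < m, ∀ j < k, ⟪v i, w j⟫ = 0 := fun i hi j hj =>
    (Submodule.mem_orthogonal _ _).1 (hwW j hj) _ (hvV i hi)
  let e : ℕ → E := fun a => if a ≤ m then v (a - 1) else w (a - m - 1)
  have ev : ∀ i < m, e (i + 1) = v i := fun i hi => by
    simp [e, Nat.succ_le_of_lt hi]
  have ew : ∀ j, e (m + (j + 1)) = w j := fun j => by
    have h1 : ¬ m + (j + 1) ≤ m := by omega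
    have h2 : m + (j + 1) - m - 1 = j := by omega
    simp only [e, if_neg h1, h2]
  have split : ∀ a ∈ Finset.Icc 1 (m + k),
      (∃ i < m, a = i + 1) ∨ ∃ j < k, a = m + (j + 1) := by
    intro a ha
    rw [Finset.mem_Icc] at ha
    by_cases h : a ≤ m
    · exact Or.inl ⟨a - 1, by omega, by omega⟩
    · exact Or.inr ⟨a - m - 1, by omega, by omega⟩
  refine ⟨e, ?_, ?_, ?_, ?_, ?_, ?_⟩
  · intro a ha b hb
    rcases split a ha with ⟨i, hi, rfl⟩ | ⟨i, hi, rfl⟩ <;>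
    rcases split b hb with ⟨j, hj, rfl⟩ | ⟨j, hj, rfl⟩
    · rw [ev i hi, ev j hj, hvo i hi j hj]
      simp
    · rw [ev i hi, ew, hvw i hi j hj, if_neg (by omega)]
    · rw [ew, ev j hj, real_inner_comm, hvw j hj i hi, if_neg (by omega)]
    · rw [ew, ew, hwo i hi j hj]
      simp
  · intro a ha
    rw [Finset.mem_Icc] at ha
    obtain ⟨i, rfl⟩ : ∃ i, a = i + 1 := ⟨a - 1, by omega⟩
    rw [ev i (by omega)]
    exact hvV i (by omega)
  · intro a ha
    rw [Finset.mem_Icc] at ha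
    obtain ⟨i, rfl⟩ : ∃ i, a = m + (i + 1) := ⟨a - m - 1, by omega⟩
    rw [ew]
    exact hwW i (by omega)
  · intro r hr1 hrk
    obtain ⟨r, rfl⟩ : ∃ r', r = r' + 1 := ⟨r - 1, by omega⟩
    obtain ⟨τ, ν, h1, h2, h3, h4, h5, h6, h7⟩ := hr r (by omega)
    refine ⟨τ, ν, h1, h2, h3, h4, h5, ?_⟩
    rw [show m + 2 * (r + 1) - 1 = m + (2 * r + 1) by omega,
      show m + 2 * (r + 1) = m + (2 * r + 1 + 1) by omega,
      show 2 * (r + 1) - 1 = 2 * r + 1 by omega, show 2 * (r + 1) = 2 * r + 1 + 1 by omega,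
      ew, ew, ev _ (by omega), ev _ (by omega)]
    exact ⟨h6, h7⟩
  · rintro ⟨j, hj⟩
    have h1 := ho j hj
    rw [hj, ew, ev _ (by omega)]
    exact h1
  · intro s hs1 hsm
    obtain ⟨s, rfl⟩ : ∃ s', s = s' + 1 := ⟨s - 1, by omega⟩
    rw [show k + 2 * (s + 1) - 1 = k + 2 * s + 1 by omega,
      show k + 2 * (s + 1) = k + 2 * s + 1 + 1 by omega, ev _ (by omega), ev _ (by omega)]
    exact hs s (by omega)
end

section
/- (Andrews–Baker reaction-term estimate, first part.) For every real number c one has 2R₁ − 2cR₂ ≤ 2|h̊|⁴ − 2(c − 2/m)|h̊|²|H|² − (2/m)(c − 1/m)|H|⁴ + 8|h̊|²|A⁻|² + 3|A⁻|⁴. -/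
/-!
Write `A_0 = h̊ + (|H|/m) Id`. Since the scalar part commutes with everything and is orthogonal to
the traceless `A_α`, all terms containing only `A_0` or `c` agree on both sides, and the claim splits
into two inequalities about symmetric matrices.

* For each `α ≥ 1`, `tr(h̊ A_α)² + ‖[h̊, A_α]‖² ≤ 2 ‖h̊‖² ‖A_α‖²` (`mixed_bound`). In an eigenbasis
  of `h̊` the trace sees only the diagonal entries of `A_α`, the commutator only the off-diagonal
  ones, and both are bounded by Cauchy–Schwarz.
* `Σ tr(A_α A_β)² + Σ ‖[A_α, A_β]‖² ≤ (3/2) (Σ ‖A_α‖²)²` (`li_li`, the inequality of Li and Li).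
  Rotating the family (`sum_sq_rotate`), the Gram matrix may be assumed diagonal. For a pairwise
  orthogonal family with `‖B_α‖² ≤ M`, Lu's inequality
  `Σ_α ‖[A, B_α]‖² ≤ ‖A‖² (Σ_α ‖B_α‖² + M)` holds (`lu_inequality`). Applying it with `A` each member of
  the family and `B` the remaining members bounds the left side by `N² + N₁ N₂ + N₁ (N - N₁)`, where
  `N = Σ ‖A_α‖²` and `N₁ ≥ N₂` are the two largest squared norms; as `N₁ + N₂ ≤ N`, this is at most
  `(3/2) N²`.

For Lu's inequality take an eigenbasis of `A`, with eigenvalues `λ`. The left side becomes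
`Σ_{i<j} w_ij (λ_i - λ_j)²` with `w_ij = 2 Σ_α (B_α)_ij²`, and Bessel's inequality gives `w_ij ≤ M`.
This is the quadratic form of a weighted graph Laplacian, and its largest eigenvalue is at most
`Σ w + M` (`laplacian_bound`): the incidence vectors `e_i - e_j` of two distinct edges
have inner product at most `1` in absolute value, while each has squared length `2`.
-/


open Finset

/-- Squared Frobenius norm of a real matrix. -/
def frobSq {m : ℕ} (M : Matrix (Fin m) (Fin m) ℝ) : ℝ := ∑ i, ∑ j, (M i j) ^ 2

/-- The reaction term `R₁ = Σ_{α,β} (tr(A_α A_β))² + Σ_{α,β} ‖A_α A_β − A_β A_α‖²`. -/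
def reactionR1 {m k : ℕ} (A : Fin k → Matrix (Fin m) (Fin m) ℝ) : ℝ :=
  (∑ α, ∑ β, (Matrix.trace (A α * A β)) ^ 2)
    + ∑ α, ∑ β, frobSq (A α * A β - A β * A α)

/-- The traceless part `h̊ = A_0 − (|H|/m)·Id` of the second fundamental form in the
principal direction. -/
noncomputable def tracelessh {m k : ℕ} (hk : 0 < k)
    (A : Fin k → Matrix (Fin m) (Fin m) ℝ) (H : ℝ) : Matrix (Fin m) (Fin m) ℝ :=
  A ⟨0, hk⟩ - (H / (m : ℝ)) • (1 : Matrix (Fin m) (Fin m) ℝ)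

/-- `|A⁻|² = Σ_{α ≥ 1} ‖A_α‖²`. -/
def AminusSq {m k : ℕ} (hk : 0 < k) (A : Fin k → Matrix (Fin m) (Fin m) ℝ) : ℝ :=
  ∑ α ∈ Finset.univ.erase ⟨0, hk⟩, frobSq (A α)

/-! ### The largest eigenvalue of a weighted graph Laplacian -/

/-- Incidence vector `e_i - e_j` of the oriented edge `p = (i, j)`. -/
def edgeVec {m : ℕ} (p : Fin m × Fin m) (k : Fin m) : ℝ :=
  (if p.1 = k then 1 else 0) - (if p.2 = k then 1 else 0)

/-- The pairs `(i, j)` with `i < j`: the edges of the complete graph, each listed once. -/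
def edges (m : ℕ) : Finset (Fin m × Fin m) := Finset.univ.filter (fun p => p.1 < p.2)

lemma sum_mul_edgeVec {m : ℕ} (l : Fin m → ℝ) (p : Fin m × Fin m) :
    ∑ k, l k * edgeVec p k = l p.1 - l p.2 := by
  simp [edgeVec, mul_sub, Finset.sum_sub_distrib]

lemma abs_inner_edgeVec {m : ℕ} {p q : Fin m × Fin m} (hp : p.1 < p.2) (hq : q.1 < q.2) :
    |∑ k, edgeVec p k * edgeVec q k| ≤ 1 + (if p = q then 1 else 0) := by
  rw [sum_mul_edgeVec]
  obtain ⟨i, j⟩ := p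
  obtain ⟨k, l⟩ := q
  simp only [edgeVec, Prod.mk.injEq] at *
  rw [abs_le]
  have h1 : ¬ (i = l ∧ j = k) := by rintro ⟨rfl, rfl⟩; exact lt_asymm hp hq
  have h2 : i ≠ j := hp.ne
  have h3 : k ≠ l := hq.ne
  by_cases a : i = k <;> by_cases b : i = l <;> by_cases c : j = k <;> by_cases d : j = l <;>
    (simp_all; try norm_num)

/-- The Laplacian of a graph with edge weights `0 ≤ w ≤ M` has largest eigenvalue at most
`∑ w + M`. -/
lemma laplacian_bound {m : ℕ} (l : Fin m → ℝ) (w : Fin m × Fin m → ℝ) (hw : ∀ p, 0 ≤ w p)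
    (M : ℝ) (hM : ∀ p, p ∈ edges m → w p ≤ M) (hM0 : 0 ≤ M) :
    ∑ p ∈ edges m, w p * (l p.1 - l p.2) ^ 2
      ≤ (∑ i, l i ^ 2) * (∑ p ∈ edges m, w p + M) := by
  set d : Fin m × Fin m → ℝ := fun p => l p.1 - l p.2 with hd
  set X := ∑ p ∈ edges m, w p * (l p.1 - l p.2) ^ 2 with hX
  have hX0 : 0 ≤ X := Finset.sum_nonneg fun p _ => mul_nonneg (hw p) (sq_nonneg _)
  have hL0 : 0 ≤ ∑ i, l i ^ 2 := Finset.sum_nonneg fun p _ => sq_nonneg _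
  have hW0 : 0 ≤ ∑ p ∈ edges m, w p := Finset.sum_nonneg fun p _ => hw p
  set v : Fin m → ℝ := fun k => ∑ p ∈ edges m, w p * d p * edgeVec p k with hv
  have h1 : X = ∑ k, l k * v k := by
    simp only [hv, Finset.mul_sum]
    rw [Finset.sum_comm, hX]
    refine Finset.sum_congr rfl fun p _ => ?_
    have : ∀ k, l k * (w p * d p * edgeVec p k) = w p * d p * (l k * edgeVec p k) := fun k => by ring
    simp only [this]
    rw [← Finset.mul_sum, sum_mul_edgeVec]
    simp only [hd]
    ring
  have h2 : ∑ k, v k ^ 2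
      = ∑ p ∈ edges m, ∑ q ∈ edges m,
        (w p * d p) * (w q * d q) * ∑ k, edgeVec p k * edgeVec q k := by
    simp only [hv, sq, Finset.sum_mul_sum]
    simp only [Finset.mul_sum]
    rw [Finset.sum_comm]
    refine Finset.sum_congr rfl fun p _ => ?_
    rw [Finset.sum_comm]
    refine Finset.sum_congr rfl fun q _ => Finset.sum_congr rfl fun k _ => ?_
    ring
  have h3 : ∑ k, v k ^ 2
      ≤ ∑ p ∈ edges m, ∑ q ∈ edges m, |w p * d p| * |w q * d q| * (1 + (if p = q then 1 else 0)) := by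
    rw [h2]
    refine Finset.sum_le_sum fun p hp => Finset.sum_le_sum fun q hq => ?_
    refine (le_abs_self _).trans ?_
    rw [abs_mul, abs_mul]
    refine mul_le_mul_of_nonneg_left (abs_inner_edgeVec ?_ ?_) (by positivity)
    · simpa [edges] using hp
    · simpa [edges] using hq
  have h4 : ∑ p ∈ edges m, ∑ q ∈ edges m,
        |w p * d p| * |w q * d q| * (1 + (if p = q then 1 else 0))
      = (∑ p ∈ edges m, |w p * d p|) ^ 2 + ∑ p ∈ edges m, (w p * d p) ^ 2 := by
    rw [sq, Finset.sum_mul_sum, ← Finset.sum_add_distrib]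
    refine Finset.sum_congr rfl fun p hp => ?_
    simp only [mul_add, Finset.sum_add_distrib, mul_one, mul_ite, mul_zero]
    rw [Finset.sum_ite_eq, if_pos hp, abs_mul_abs_self, ← sq]
  have h5 : (∑ p ∈ edges m, |w p * d p|) ^ 2 ≤ (∑ p ∈ edges m, w p) * X := by
    refine Finset.sum_sq_le_sum_mul_sum_of_sq_le_mul _ (fun p _ => hw p)
      (fun p _ => mul_nonneg (hw p) (sq_nonneg _)) fun p _ => ?_
    rw [sq_abs]
    simp only [hd]
    exact le_of_eq (by ring)
  have h6 : ∑ p ∈ edges m, (w p * d p) ^ 2 ≤ M * X := by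
    rw [hX, Finset.mul_sum]
    refine Finset.sum_le_sum fun p hp => ?_
    have := mul_le_mul_of_nonneg_right (hM p hp) (mul_nonneg (hw p) (sq_nonneg (d p)))
    simp only [hd] at this ⊢
    linarith
  -- With `v` the Laplacian applied to `l`, Cauchy–Schwarz for `X = ⟨l, v⟩` and
  -- `‖v‖² ≤ (∑ w + M) X` give the claim after cancelling one factor `X`.
  have h7 : X ^ 2 ≤ (∑ i, l i ^ 2) * ∑ k, v k ^ 2 := by
    rw [h1]
    exact Finset.sum_mul_sq_le_sq_mul_sq _ _ _
  have h8 : X ^ 2 ≤ (∑ i, l i ^ 2) * ((∑ p ∈ edges m, w p + M) * X) :=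
    h7.trans (mul_le_mul_of_nonneg_left (by linarith) hL0)
  rcases hX0.eq_or_lt with h0 | h0
  · rw [← h0]
    positivity
  · refine le_of_mul_le_mul_right ?_ h0
    linarith

lemma sum_eq_diag_add_edges {m : ℕ} (f : Fin m → Fin m → ℝ) (hf : ∀ i j, f i j = f j i) :
    ∑ i, ∑ j, f i j = ∑ i, f i i + 2 * ∑ p ∈ edges m, f p.1 p.2 := by
  have hlt : ∑ p ∈ edges m, f p.1 p.2 = ∑ i, ∑ j, if i < j then f i j else 0 := by
    rw [edges, Finset.sum_filter, ← Finset.univ_product_univ, Finset.sum_product]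
  have hgt : ∑ p ∈ edges m, f p.1 p.2 = ∑ i, ∑ j, if j < i then f i j else 0 := by
    rw [hlt, Finset.sum_comm]
    refine Finset.sum_congr rfl fun i _ => Finset.sum_congr rfl fun j _ => ?_
    rw [hf]
  have hdiag : ∑ i, f i i = ∑ i, ∑ j, if i = j then f i j else 0 := by simp
  rw [two_mul]
  nth_rewrite 1 [hlt]
  rw [hgt, hdiag, ← Finset.sum_add_distrib, ← Finset.sum_add_distrib]
  refine Finset.sum_congr rfl fun i _ => ?_
  rw [← Finset.sum_add_distrib, ← Finset.sum_add_distrib]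
  refine Finset.sum_congr rfl fun j _ => ?_
  rcases lt_trichotomy i j with h | h | h
  · simp [h, h.ne, h.asymm]
  · simp [h]
  · simp [h, h.ne', h.asymm]

/-! ### Frobenius norm and orthogonal conjugation -/

lemma frobSq_nonneg {m : ℕ} (M : Matrix (Fin m) (Fin m) ℝ) : 0 ≤ frobSq M :=
  Finset.sum_nonneg fun _ _ => Finset.sum_nonneg fun _ _ => sq_nonneg _

lemma frobSq_eq_trace {m : ℕ} (M : Matrix (Fin m) (Fin m) ℝ) :
    frobSq M = (M * M.transpose).trace := by
  simp [frobSq, Matrix.trace, Matrix.mul_apply, sq]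

lemma frobSq_eq_trace_of_symm {m : ℕ} {M : Matrix (Fin m) (Fin m) ℝ} (h : M.IsSymm) :
    frobSq M = (M * M).trace := by
  rw [frobSq_eq_trace, h.eq]

lemma trace_conj {m : ℕ} {U : Matrix (Fin m) (Fin m) ℝ} (hU : U * U.transpose = 1)
    (M : Matrix (Fin m) (Fin m) ℝ) : (U.transpose * M * U).trace = M.trace := by
  rw [Matrix.trace_mul_comm, ← Matrix.mul_assoc, hU, Matrix.one_mul]

lemma orthConj_mul {m : ℕ} {U : Matrix (Fin m) (Fin m) ℝ} (hU : U * U.transpose = 1)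
    (M N : Matrix (Fin m) (Fin m) ℝ) :
    (U.transpose * M * U) * (U.transpose * N * U) = U.transpose * (M * N) * U := by
  calc (U.transpose * M * U) * (U.transpose * N * U)
      = U.transpose * M * (U * U.transpose) * N * U := by simp only [Matrix.mul_assoc]
    _ = _ := by rw [hU]; simp only [Matrix.mul_assoc, Matrix.one_mul]

lemma frobSq_conj {m : ℕ} {U : Matrix (Fin m) (Fin m) ℝ} (hU : U * U.transpose = 1)
    (M : Matrix (Fin m) (Fin m) ℝ) : frobSq (U.transpose * M * U) = frobSq M := by
  have h : (U.transpose * M * U).transpose = U.transpose * M.transpose * U := by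
    simp only [Matrix.transpose_mul, Matrix.transpose_transpose, Matrix.mul_assoc]
  rw [frobSq_eq_trace, h, orthConj_mul hU, trace_conj hU, frobSq_eq_trace]

lemma conj_isSymm {m : ℕ} (U : Matrix (Fin m) (Fin m) ℝ) {M : Matrix (Fin m) (Fin m) ℝ}
    (hM : M.IsSymm) : (U.transpose * M * U).IsSymm := by
  rw [Matrix.IsSymm]
  simp only [Matrix.transpose_mul, Matrix.transpose_transpose, Matrix.mul_assoc, hM.eq]

lemma exists_diagonalization {ι : Type*} [Fintype ι] [DecidableEq ι] {A : Matrix ι ι ℝ}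
    (hA : A.IsSymm) :
    ∃ (U : Matrix ι ι ℝ) (l : ι → ℝ),
      U * U.transpose = 1 ∧ U.transpose * A * U = Matrix.diagonal l := by
  have hH : A.IsHermitian := by
    rw [Matrix.IsHermitian, Matrix.conjTranspose_eq_transpose_of_trivial]
    exact hA
  set U : Matrix ι ι ℝ := (hH.eigenvectorUnitary : Matrix ι ι ℝ) with hUdef
  have hs : star U = U.transpose := by
    rw [Matrix.star_eq_conjTranspose, Matrix.conjTranspose_eq_transpose_of_trivial]
  have h1 : U * U.transpose = 1 := by
    rw [← hs]; exact Unitary.mul_star_self_of_mem hH.eigenvectorUnitary.2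
  have h2 : U.transpose * U = 1 := by
    rw [← hs]; exact Unitary.star_mul_self_of_mem hH.eigenvectorUnitary.2
  refine ⟨U, hH.eigenvalues, h1, ?_⟩
  have h3 : A = U * Matrix.diagonal hH.eigenvalues * U.transpose := by
    have := hH.spectral_theorem
    rw [Unitary.conjStarAlgAut_apply] at this
    rw [← hs]
    exact this
  calc U.transpose * A * U
      = (U.transpose * U) * Matrix.diagonal hH.eigenvalues * (U.transpose * U) := by
        nth_rewrite 1 [h3]
        simp only [Matrix.mul_assoc]
    _ = _ := by rw [h2]; simp

lemma frobSq_diagonal {m : ℕ} (l : Fin m → ℝ) :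
    frobSq (Matrix.diagonal l) = ∑ i, l i ^ 2 := by
  rw [frobSq_eq_trace_of_symm (Matrix.isSymm_diagonal l)]
  simp [Matrix.trace, sq]

lemma frobSq_comm_diagonal {m : ℕ} (l : Fin m → ℝ) (B : Matrix (Fin m) (Fin m) ℝ) :
    frobSq (Matrix.diagonal l * B - B * Matrix.diagonal l)
      = ∑ i, ∑ j, (l i - l j) ^ 2 * B i j ^ 2 := by
  refine Finset.sum_congr rfl fun i _ => Finset.sum_congr rfl fun j _ => ?_
  rw [Matrix.sub_apply, Matrix.diagonal_mul, Matrix.mul_diagonal]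
  ring

lemma frobSq_comm_conj {m : ℕ} {U : Matrix (Fin m) (Fin m) ℝ} (hU : U * U.transpose = 1)
    (A B : Matrix (Fin m) (Fin m) ℝ) :
    frobSq (A * B - B * A)
      = frobSq ((U.transpose * A * U) * (U.transpose * B * U)
          - (U.transpose * B * U) * (U.transpose * A * U)) := by
  rw [orthConj_mul hU, orthConj_mul hU, ← frobSq_conj hU (A * B - B * A), Matrix.mul_sub, Matrix.sub_mul]

/-! ### The mixed terms -/

lemma mixed_bound_diagonal {m : ℕ} (l : Fin m → ℝ) (B : Matrix (Fin m) (Fin m) ℝ) :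
    (Matrix.diagonal l * B).trace ^ 2
      + frobSq (Matrix.diagonal l * B - B * Matrix.diagonal l)
      ≤ 2 * frobSq (Matrix.diagonal l) * frobSq B := by
  have hL0 : 0 ≤ ∑ i, l i ^ 2 := Finset.sum_nonneg fun p _ => sq_nonneg _
  have ht : (Matrix.diagonal l * B).trace ^ 2 ≤ (∑ i, l i ^ 2) * ∑ i, B i i ^ 2 := by
    have : (Matrix.diagonal l * B).trace = ∑ i, l i * B i i := by
      simp [Matrix.trace, Matrix.diagonal_mul]
    rw [this]
    exact Finset.sum_mul_sq_le_sq_mul_sq _ _ _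
  rw [frobSq_comm_diagonal, frobSq_diagonal]
  have hd : (∑ i, l i ^ 2) * ∑ i, B i i ^ 2
      = ∑ i, ∑ j, if i = j then (∑ i, l i ^ 2) * B i j ^ 2 else 0 := by
    simp [Finset.mul_sum]
  refine (add_le_add_left ht _).trans ?_
  rw [hd, ← Finset.sum_add_distrib, frobSq, Finset.mul_sum]
  refine Finset.sum_le_sum fun i _ => ?_
  rw [← Finset.sum_add_distrib, Finset.mul_sum]
  refine Finset.sum_le_sum fun j _ => ?_
  by_cases hij : i = j
  · subst hij
    have := mul_nonneg hL0 (sq_nonneg (B i i))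
    simp only [if_true, sub_self]
    nlinarith
  · have h2 : l i ^ 2 + l j ^ 2 ≤ ∑ i, l i ^ 2 := by
      rw [← Finset.sum_pair (f := fun i => l i ^ 2) hij]
      exact Finset.sum_le_sum_of_subset_of_nonneg (Finset.subset_univ _) fun _ _ _ => sq_nonneg _
    simp only [hij, if_false, zero_add]
    refine mul_le_mul_of_nonneg_right ?_ (sq_nonneg _)
    nlinarith [sq_nonneg (l i + l j)]

lemma mixed_bound {m : ℕ} {A : Matrix (Fin m) (Fin m) ℝ} (hA : A.IsSymm)
    (B : Matrix (Fin m) (Fin m) ℝ) :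
    (A * B).trace ^ 2 + frobSq (A * B - B * A) ≤ 2 * frobSq A * frobSq B := by
  obtain ⟨U, l, hU, hD⟩ := exists_diagonalization hA
  have := mixed_bound_diagonal l (U.transpose * B * U)
  rwa [← hD, ← frobSq_comm_conj hU, orthConj_mul hU, trace_conj hU, frobSq_conj hU,
    frobSq_conj hU] at this

/-! ### Lu's inequality -/

/-- Bessel's inequality for an orthogonal family of symmetric matrices, tested against the
unit matrix `(E_ij + E_ji)/√2` with `i ≠ j`. -/
lemma bessel_entry {m : ℕ} {ι : Type*} (s : Finset ι) (B : ι → Matrix (Fin m) (Fin m) ℝ)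
    (hB : ∀ a ∈ s, (B a).IsSymm) (horth : ∀ a ∈ s, ∀ b ∈ s, a ≠ b → (B a * B b).trace = 0)
    (M : ℝ) (hM0 : 0 ≤ M) (hM : ∀ a ∈ s, frobSq (B a) ≤ M) {i j : Fin m} (hij : i ≠ j) :
    ∑ a ∈ s, 2 * B a i j ^ 2 ≤ M := by
  classical
  set S := ∑ a ∈ s, B a i j ^ 2 with hS
  have hS0 : 0 ≤ S := Finset.sum_nonneg fun _ _ => sq_nonneg _
  -- The sum of the `⟨E, B_a⟩ B_a` over the family, up to normalization, for the test matrix `E`.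
  set V : Matrix (Fin m) (Fin m) ℝ := ∑ a ∈ s, B a i j • B a with hV
  have hVs : V.IsSymm := by
    rw [Matrix.IsSymm, hV, Matrix.transpose_sum]
    refine Finset.sum_congr rfl fun a ha => ?_
    rw [Matrix.transpose_smul, (hB a ha).eq]
  have hVij : V i j = S := by
    simp [hV, hS, Matrix.sum_apply, sq]
  have hVji : V j i = S := by rw [hVs.apply, hVij]
  have hlow : 2 * S ^ 2 ≤ frobSq V := by
    have h := sum_eq_diag_add_edges (fun i j => V i j ^ 2) fun i j => by rw [hVs.apply]
    have h0 : 0 ≤ ∑ i, V i i ^ 2 := Finset.sum_nonneg fun _ _ => sq_nonneg _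
    have h1 : S ^ 2 ≤ ∑ p ∈ edges m, V p.1 p.2 ^ 2 := by
      rcases lt_or_gt_of_ne hij with h | h
      · have := Finset.single_le_sum (f := fun p : Fin m × Fin m => V p.1 p.2 ^ 2) (s := edges m)
          (a := (i, j)) (fun _ _ => sq_nonneg _) (by simpa [edges] using h)
        simpa [hVij] using this
      · have := Finset.single_le_sum (f := fun p : Fin m × Fin m => V p.1 p.2 ^ 2) (s := edges m)
          (a := (j, i)) (fun _ _ => sq_nonneg _) (by simpa [edges] using h)
        simpa [hVji] using this
    rw [frobSq]
    linarith
  have hup : frobSq V ≤ M * S := by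
    have : frobSq V = ∑ a ∈ s, B a i j ^ 2 * frobSq (B a) := by
      rw [frobSq_eq_trace_of_symm hVs, hV, Finset.sum_mul_sum, Matrix.trace_sum]
      refine Finset.sum_congr rfl fun a ha => ?_
      rw [Matrix.trace_sum, Finset.sum_eq_single a]
      · rw [frobSq_eq_trace_of_symm (hB a ha)]
        simp only [Matrix.smul_mul, Matrix.mul_smul, Matrix.trace_smul, smul_eq_mul]
        ring
      · intro b hb hba
        simp [horth a ha b hb hba.symm]
      · intro h; exact absurd ha h
    rw [this, hS, Finset.mul_sum]
    refine Finset.sum_le_sum fun a ha => ?_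
    rw [mul_comm]
    exact mul_le_mul_of_nonneg_right (hM a ha) (sq_nonneg _)
  rw [← Finset.mul_sum, ← hS]
  rcases hS0.eq_or_lt with h0 | h0
  · rw [← h0]; simpa using hM0
  · refine le_of_mul_le_mul_right ?_ h0
    linarith

/-- Lu's inequality for a pairwise orthogonal family of symmetric matrices of squared norm at most
`M`. -/
lemma lu_inequality {m : ℕ} {ι : Type*} (s : Finset ι) {A : Matrix (Fin m) (Fin m) ℝ}
    (hA : A.IsSymm) (B : ι → Matrix (Fin m) (Fin m) ℝ)
    (hB : ∀ a ∈ s, (B a).IsSymm) (horth : ∀ a ∈ s, ∀ b ∈ s, a ≠ b → (B a * B b).trace = 0)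
    (M : ℝ) (hM0 : 0 ≤ M) (hM : ∀ a ∈ s, frobSq (B a) ≤ M) :
    ∑ a ∈ s, frobSq (A * B a - B a * A) ≤ frobSq A * (∑ a ∈ s, frobSq (B a) + M) := by
  obtain ⟨U, l, hU, hD⟩ := exists_diagonalization hA
  set C : ι → Matrix (Fin m) (Fin m) ℝ := fun a => U.transpose * B a * U with hC
  have hCs : ∀ a ∈ s, (C a).IsSymm := fun a ha => conj_isSymm U (hB a ha)
  have hCorth : ∀ a ∈ s, ∀ b ∈ s, a ≠ b → (C a * C b).trace = 0 := fun a ha b hb hab => by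
    rw [hC, orthConj_mul hU, trace_conj hU, horth a ha b hb hab]
  have hCn : ∀ a, frobSq (C a) = frobSq (B a) := fun a => frobSq_conj hU _
  have hcomm : ∀ a ∈ s, frobSq (A * B a - B a * A)
      = ∑ p ∈ edges m, 2 * C a p.1 p.2 ^ 2 * (l p.1 - l p.2) ^ 2 := fun a ha => by
    rw [frobSq_comm_conj hU, hD]
    change frobSq (Matrix.diagonal l * C a - C a * Matrix.diagonal l) = _
    rw [frobSq_comm_diagonal,
      sum_eq_diag_add_edges (fun i j => (l i - l j) ^ 2 * C a i j ^ 2) fun i j => by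
        rw [(hCs a ha).apply]; ring]
    simp only [sub_self, ne_eq, OfNat.ofNat_ne_zero, not_false_eq_true, zero_pow, zero_mul,
      Finset.sum_const_zero, zero_add, Finset.mul_sum]
    exact Finset.sum_congr rfl fun p _ => by ring
  rw [Finset.sum_congr rfl hcomm, Finset.sum_comm]
  simp only [← Finset.sum_mul]
  have hlap := laplacian_bound l (fun p => ∑ a ∈ s, 2 * C a p.1 p.2 ^ 2)
    (fun p => Finset.sum_nonneg fun _ _ => by positivity) M
    (fun p hp => bessel_entry s C hCs hCorth M hM0 (fun a ha => (hCn a).trans_le (hM a ha))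
      (by simpa [edges] using hp : p.1 < p.2).ne) hM0
  have hfA : frobSq A = ∑ i, l i ^ 2 := by
    rw [← frobSq_conj hU A, hD, frobSq_diagonal]
  refine hlap.trans ?_
  rw [hfA]
  refine mul_le_mul_of_nonneg_left ?_ (Finset.sum_nonneg fun p _ => sq_nonneg _)
  rw [Finset.sum_comm]
  refine add_le_add_left (Finset.sum_le_sum fun a ha => ?_) _
  rw [← hCn a, frobSq, sum_eq_diag_add_edges (fun i j => C a i j ^ 2) fun i j => by
    rw [(hCs a ha).apply], ← Finset.mul_sum]
  have : 0 ≤ ∑ i, C a i i ^ 2 := Finset.sum_nonneg fun _ _ => sq_nonneg _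
  linarith

/-! ### The Li–Li inequality -/

lemma li_li_orthogonal {m : ℕ} {ι : Type*} [Fintype ι]
    (B : ι → Matrix (Fin m) (Fin m) ℝ) (hB : ∀ a, (B a).IsSymm)
    (horth : ∀ a b, a ≠ b → (B a * B b).trace = 0) :
    (∑ a, ∑ b, (B a * B b).trace ^ 2) + ∑ a, ∑ b, frobSq (B a * B b - B b * B a)
      ≤ 3 / 2 * (∑ a, frobSq (B a)) ^ 2 := by
  classical
  rcases isEmpty_or_nonempty ι with h | h
  · simp
  set N := ∑ a, frobSq (B a) with hN
  obtain ⟨a₁, -, hmax⟩ := Finset.exists_max_image Finset.univ (fun a => frobSq (B a))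
    Finset.univ_nonempty
  have hN1 : frobSq (B a₁) + ∑ a ∈ Finset.univ.erase a₁, frobSq (B a) = N :=
    Finset.add_sum_erase _ (fun a => frobSq (B a)) (Finset.mem_univ a₁)
  have hdiag : ∑ a, ∑ b, (B a * B b).trace ^ 2 = ∑ a, frobSq (B a) ^ 2 := by
    refine Finset.sum_congr rfl fun a _ => ?_
    rw [Finset.sum_eq_single a]
    · rw [frobSq_eq_trace_of_symm (hB a)]
    · intro b _ hb
      rw [horth a b hb.symm]; simp
    · simp
  have hrow : ∀ a M, 0 ≤ M → (∀ b, b ≠ a → frobSq (B b) ≤ M) →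
      ∑ b, frobSq (B a * B b - B b * B a) ≤ frobSq (B a) * (N - frobSq (B a) + M) := by
    intro a M hM0 hM
    have h1 := lu_inequality (Finset.univ.erase a) (hB a) B (fun b _ => hB b)
      (fun b _ c _ hbc => horth b c hbc) M hM0 (fun b hb => hM b (Finset.ne_of_mem_erase hb))
    have h2 := Finset.add_sum_erase Finset.univ (fun b => frobSq (B a * B b - B b * B a))
      (Finset.mem_univ a)
    have h3 := Finset.add_sum_erase Finset.univ (fun b => frobSq (B b)) (Finset.mem_univ a)
    have h4 : frobSq (B a * B a - B a * B a) = 0 := by simp [frobSq]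
    have h5 : ∑ b ∈ Finset.univ.erase a, frobSq (B b) = N - frobSq (B a) := by
      rw [hN]; linarith
    rw [h5] at h1
    simp only [h4] at h2
    linarith
  -- The second largest squared norm, or `0` when the family has one member.
  obtain ⟨M₂, hM20, hM2, hM2N⟩ : ∃ M₂ : ℝ, 0 ≤ M₂ ∧ (∀ b, b ≠ a₁ → frobSq (B b) ≤ M₂) ∧
      M₂ ≤ frobSq (B a₁) ∧ frobSq (B a₁) + M₂ ≤ N := by
    rcases (Finset.univ.erase a₁).eq_empty_or_nonempty with he | hne
    · refine ⟨0, le_rfl, fun b hb => ?_, frobSq_nonneg _, ?_⟩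
      · exact absurd (Finset.mem_erase.2 ⟨hb, Finset.mem_univ b⟩) (by simp [he])
      · rw [he] at hN1
        simp at hN1
        linarith
    · obtain ⟨a₂, ha₂, hmax₂⟩ := Finset.exists_max_image _ (fun a => frobSq (B a)) hne
      refine ⟨frobSq (B a₂), frobSq_nonneg _, fun b hb => hmax₂ b (by simp [hb]),
        hmax a₂ (Finset.mem_univ _), ?_⟩
      rw [← hN1]
      have := Finset.single_le_sum (f := fun a => frobSq (B a)) (fun _ _ => frobSq_nonneg _) ha₂
      linarith
  have hfirst := hrow a₁ M₂ hM20 hM2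
  have hrest : ∑ a ∈ Finset.univ.erase a₁, (frobSq (B a) ^ 2
        + ∑ b, frobSq (B a * B b - B b * B a))
      ≤ (N - frobSq (B a₁)) * (N + frobSq (B a₁)) := by
    have h1 : N - frobSq (B a₁) = ∑ a ∈ Finset.univ.erase a₁, frobSq (B a) := by linarith
    rw [h1, Finset.sum_mul]
    refine Finset.sum_le_sum fun a _ => ?_
    have := hrow a (frobSq (B a₁)) (frobSq_nonneg _) (fun b _ => hmax b (Finset.mem_univ _))
    linarith
  rw [hdiag, ← Finset.sum_add_distrib, ← Finset.add_sum_erase _ _ (Finset.mem_univ a₁)]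
  set x := frobSq (B a₁)
  have key : x * (N - x + M₂) ≤ N ^ 2 / 2 := by
    nlinarith [hM2N.1, hM2N.2, sq_nonneg (x - M₂),
      mul_nonneg (sub_nonneg.2 hM2N.2) (by linarith [hM2N.1, hM2N.2] : 0 ≤ N - (x - M₂))]
  linarith

lemma sum_sq_orthogonal {ι : Type*} [Fintype ι] [DecidableEq ι] {U : Matrix ι ι ℝ}
    (hU : U * U.transpose = 1) (x : ι → ℝ) :
    ∑ c, (∑ a, U a c * x a) ^ 2 = ∑ a, x a ^ 2 := by
  have h : ∀ a b, ∑ c, U a c * U b c = if a = b then 1 else 0 := fun a b => by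
    have := congrFun (congrFun hU a) b
    simpa [Matrix.mul_apply, Matrix.one_apply] using this
  calc ∑ c, (∑ a, U a c * x a) ^ 2
      = ∑ a, ∑ b, x a * x b * ∑ c, U a c * U b c := by
        simp only [sq, Finset.sum_mul_sum]
        simp only [Finset.mul_sum]
        rw [Finset.sum_comm]
        refine Finset.sum_congr rfl fun a _ => ?_
        rw [Finset.sum_comm]
        exact Finset.sum_congr rfl fun b _ => Finset.sum_congr rfl fun c _ => by ring
    _ = ∑ a, x a ^ 2 := by simp [h, sq]

/-- An orthogonal change of the family acts isometrically on doubly indexed quantities that are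
bilinear in it, such as traces of products and entries of commutators. -/
lemma sum_sq_rotate {ι : Type*} [Fintype ι] [DecidableEq ι] {U : Matrix ι ι ℝ}
    (hU : U * U.transpose = 1) (x : ι → ι → ℝ) :
    ∑ c, ∑ d, (∑ a, ∑ b, U a c * U b d * x a b) ^ 2 = ∑ a, ∑ b, x a b ^ 2 := by
  have h1 : ∀ c d, ∑ a, ∑ b, U a c * U b d * x a b = ∑ b, U b d * ∑ a, U a c * x a b := by
    intro c d
    rw [Finset.sum_comm]
    refine Finset.sum_congr rfl fun b _ => ?_
    rw [Finset.mul_sum]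
    exact Finset.sum_congr rfl fun a _ => by ring
  simp only [h1]
  simp only [sum_sq_orthogonal hU]
  rw [Finset.sum_comm]
  simp only [sum_sq_orthogonal hU]
  rw [Finset.sum_comm]

lemma li_li {m : ℕ} {ι : Type*} [Fintype ι]
    (A : ι → Matrix (Fin m) (Fin m) ℝ) (hA : ∀ a, (A a).IsSymm) :
    (∑ a, ∑ b, (A a * A b).trace ^ 2) + ∑ a, ∑ b, frobSq (A a * A b - A b * A a)
      ≤ 3 / 2 * (∑ a, frobSq (A a)) ^ 2 := by
  classical
  set G : Matrix ι ι ℝ := Matrix.of fun a b => (A a * A b).trace with hG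
  have hGs : G.IsSymm := Matrix.IsSymm.ext fun a b => Matrix.trace_mul_comm (A b) (A a)
  obtain ⟨U, l, hU, hD⟩ := exists_diagonalization hGs
  set B : ι → Matrix (Fin m) (Fin m) ℝ := fun c => ∑ a, U a c • A a with hBdef
  have hB : ∀ c, (B c).IsSymm := fun c => by
    rw [Matrix.IsSymm, hBdef, Matrix.transpose_sum]
    refine Finset.sum_congr rfl fun a _ => ?_
    rw [Matrix.transpose_smul, (hA a).eq]
  have hmul : ∀ c d, B c * B d = ∑ a, ∑ b, (U a c * U b d) • (A a * A b) := fun c d => by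
    simp only [hBdef, Finset.sum_mul_sum, Matrix.smul_mul, Matrix.mul_smul, smul_smul]
    exact Finset.sum_congr rfl fun a _ => Finset.sum_congr rfl fun b _ => by rw [mul_comm (U b d)]
  have hmul' : ∀ c d, B d * B c = ∑ a, ∑ b, (U a c * U b d) • (A b * A a) := fun c d => by
    rw [hmul, Finset.sum_comm]
    exact Finset.sum_congr rfl fun a _ => Finset.sum_congr rfl fun b _ => by rw [mul_comm (U b d)]
  have htr : ∀ c d, (B c * B d).trace = ∑ a, ∑ b, U a c * U b d * (A a * A b).trace :=
    fun c d => by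
      rw [hmul]
      simp only [Matrix.trace_sum, Matrix.trace_smul, smul_eq_mul]
  have horth : ∀ c d, c ≠ d → (B c * B d).trace = 0 := fun c d hcd => by
    have h := congrFun (congrFun hD c) d
    rw [Matrix.diagonal_apply_ne _ hcd] at h
    rw [htr, ← h]
    simp only [Matrix.mul_apply, Matrix.transpose_apply, hG, Matrix.of_apply, Finset.sum_mul]
    rw [Finset.sum_comm]
    exact Finset.sum_congr rfl fun a _ => Finset.sum_congr rfl fun b _ => by ring
  have e1 : ∑ c, ∑ d, (B c * B d).trace ^ 2 = ∑ a, ∑ b, (A a * A b).trace ^ 2 := by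
    simp only [htr]
    exact sum_sq_rotate hU _
  have e2 : ∑ c, ∑ d, frobSq (B c * B d - B d * B c)
      = ∑ a, ∑ b, frobSq (A a * A b - A b * A a) := by
    have hent : ∀ c d i j, (B c * B d - B d * B c) i j
        = ∑ a, ∑ b, U a c * U b d * (A a * A b - A b * A a) i j := fun c d i j => by
      rw [hmul c d, hmul' c d]
      simp only [← Finset.sum_sub_distrib, ← smul_sub, Matrix.sum_apply, Matrix.smul_apply,
        smul_eq_mul]
    have hswap : ∀ f : ι → ι → Fin m → Fin m → ℝ,
        ∑ a, ∑ b, ∑ i, ∑ j, f a b i j = ∑ i, ∑ j, ∑ a, ∑ b, f a b i j := fun f => by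
      calc ∑ a, ∑ b, ∑ i, ∑ j, f a b i j
          = ∑ p : ι × ι, ∑ q : Fin m × Fin m, f p.1 p.2 q.1 q.2 := by
            simp only [Fintype.sum_prod_type]
        _ = ∑ q : Fin m × Fin m, ∑ p : ι × ι, f p.1 p.2 q.1 q.2 := Finset.sum_comm
        _ = _ := by simp only [Fintype.sum_prod_type]
    simp only [frobSq]
    rw [hswap, hswap]
    refine Finset.sum_congr rfl fun i _ => Finset.sum_congr rfl fun j _ => ?_
    simp only [hent]
    exact sum_sq_rotate hU _
  have e3 : ∑ c, frobSq (B c) = ∑ a, frobSq (A a) := by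
    have hswap : ∀ f : ι → Fin m → Fin m → ℝ,
        ∑ a, ∑ i, ∑ j, f a i j = ∑ i, ∑ j, ∑ a, f a i j := fun f => by
      rw [Finset.sum_comm]
      exact Finset.sum_congr rfl fun i _ => Finset.sum_comm
    simp only [frobSq]
    rw [hswap, hswap]
    refine Finset.sum_congr rfl fun i _ => Finset.sum_congr rfl fun j _ => ?_
    simp only [hBdef, Matrix.sum_apply, Matrix.smul_apply, smul_eq_mul]
    exact sum_sq_orthogonal hU _
  rw [← e1, ← e2, ← e3]
  exact li_li_orthogonal B hB horth

/-! ### The estimate -/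

/-- Splitting a symmetric double sum into the corner, the mixed terms and the rest. -/
lemma sum_sum_split {ι : Type*} [Fintype ι] [DecidableEq ι] (o : ι) (f : ι → ι → ℝ)
    (hf : ∀ a b, f a b = f b a) :
    ∑ a, ∑ b, f a b = f o o + 2 * ∑ a ∈ Finset.univ.erase o, f o a
      + ∑ a : {a // a ≠ o}, ∑ b : {a // a ≠ o}, f a b := by
  have hsub : ∀ g : ι → ℝ, ∑ a : {a // a ≠ o}, g a = ∑ a ∈ Finset.univ.erase o, g a := fun g =>
    (Finset.sum_subtype _ (by simp) g).symm
  have hsplit : ∀ g : ι → ℝ, ∑ a, g a = g o + ∑ a ∈ Finset.univ.erase o, g a := fun g =>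
    (Finset.add_sum_erase _ _ (Finset.mem_univ o)).symm
  have h1 : ∀ a, ∑ b : {a // a ≠ o}, f a b = ∑ b ∈ Finset.univ.erase o, f a b :=
    fun a => hsub (f a)
  simp only [h1]
  rw [hsub (fun a => ∑ b ∈ Finset.univ.erase o, f a b), hsplit, hsplit (f o)]
  simp only [fun a => hsplit (f a), Finset.sum_add_distrib]
  simp only [fun a => hf a o]
  ring

/-- **Andrews–Baker reaction-term estimate, first part.** For every real `c`,
`2R₁ − 2cR₂ ≤ 2|h̊|⁴ − 2(c − 2/m)|h̊|²|H|² − (2/m)(c − 1/m)|H|⁴ + 8|h̊|²|A⁻|² + 3|A⁻|⁴`. -/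
theorem andrews_baker_reaction_estimate_one
    (m k : ℕ) (hm : 2 ≤ m) (hk : 0 < k)
    (A : Fin k → Matrix (Fin m) (Fin m) ℝ)
    (hsymm : ∀ α, (A α).IsSymm)
    (H : ℝ) (hH : 0 < H)
    (htr₀ : (A ⟨0, hk⟩).trace = H)
    (htr : ∀ α, α ≠ ⟨0, hk⟩ → (A α).trace = 0)
    (c : ℝ) :
    2 * reactionR1 A - 2 * c * (H ^ 2 * frobSq (A ⟨0, hk⟩))
      ≤ 2 * (frobSq (tracelessh hk A H)) ^ 2
        - 2 * (c - 2 / (m : ℝ)) * frobSq (tracelessh hk A H) * H ^ 2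
        - (2 / (m : ℝ)) * (c - 1 / (m : ℝ)) * H ^ 4
        + 8 * frobSq (tracelessh hk A H) * AminusSq hk A
        + 3 * (AminusSq hk A) ^ 2 := by
  set h := tracelessh hk A H with hh
  have hm0 : (m : ℝ) ≠ 0 := by positivity
  have hA0 : A ⟨0, hk⟩ = h + (H / (m : ℝ)) • (1 : Matrix (Fin m) (Fin m) ℝ) := by
    rw [hh, tracelessh, sub_add_cancel]
  have hhs : h.IsSymm := by
    rw [hh, tracelessh]
    exact (hsymm _).sub (Matrix.isSymm_one.smul _)
  have hhtr : h.trace = 0 := by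
    rw [hh, tracelessh, Matrix.trace_sub, htr₀, Matrix.trace_smul, Matrix.trace_one,
      Fintype.card_fin, smul_eq_mul, div_mul_cancel₀ _ hm0, sub_self]
  have hnorm : frobSq (A ⟨0, hk⟩) = frobSq h + H ^ 2 / m := by
    rw [frobSq_eq_trace_of_symm (hsymm _), frobSq_eq_trace_of_symm hhs, hA0]
    simp only [add_mul, mul_add, Matrix.smul_mul, Matrix.mul_smul, Matrix.one_mul, Matrix.mul_one,
      Matrix.trace_add, Matrix.trace_smul, hhtr, Matrix.trace_one, Fintype.card_fin, smul_eq_mul]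
    field_simp
    ring
  have htr0 : ∀ α, α ≠ ⟨0, hk⟩ → (A ⟨0, hk⟩ * A α).trace = (h * A α).trace := fun α hα => by
    rw [hA0, add_mul, Matrix.trace_add, Matrix.smul_mul, Matrix.one_mul, Matrix.trace_smul,
      htr α hα, smul_zero, add_zero]
  have hcomm0 : ∀ α, A ⟨0, hk⟩ * A α - A α * A ⟨0, hk⟩ = h * A α - A α * h := fun α => by
    rw [hA0, add_mul, mul_add, Matrix.smul_mul, Matrix.mul_smul, Matrix.one_mul, Matrix.mul_one,
      add_sub_add_right_eq_sub]
  have hmixed : ∑ α ∈ Finset.univ.erase ⟨0, hk⟩, (A ⟨0, hk⟩ * A α).trace ^ 2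
      + ∑ α ∈ Finset.univ.erase ⟨0, hk⟩, frobSq (A ⟨0, hk⟩ * A α - A α * A ⟨0, hk⟩)
      ≤ 2 * frobSq h * AminusSq hk A := by
    rw [AminusSq, ← Finset.sum_add_distrib, Finset.mul_sum]
    refine Finset.sum_le_sum fun α hα => ?_
    rw [htr0 α (Finset.ne_of_mem_erase hα), hcomm0]
    exact mixed_bound hhs _
  have hll := li_li (fun α : {α // α ≠ (⟨0, hk⟩ : Fin k)} => A α) fun α => hsymm α
  have hminus : ∑ α : {α // α ≠ (⟨0, hk⟩ : Fin k)}, frobSq (A α) = AminusSq hk A :=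
    (Finset.sum_subtype _ (by simp) fun α => frobSq (A α)).symm
  rw [hminus] at hll
  have hcorner : frobSq (A ⟨0, hk⟩ * A ⟨0, hk⟩ - A ⟨0, hk⟩ * A ⟨0, hk⟩) = 0 := by simp [frobSq]
  have hR : reactionR1 A ≤ (frobSq h + H ^ 2 / m) ^ 2 + 4 * frobSq h * AminusSq hk A
      + 3 / 2 * AminusSq hk A ^ 2 := by
    rw [reactionR1, sum_sum_split ⟨0, hk⟩ (fun α β => (A α * A β).trace ^ 2)
        (fun α β => by rw [Matrix.trace_mul_comm]),
      sum_sum_split ⟨0, hk⟩ (fun α β => frobSq (A α * A β - A β * A α)) (fun α β => by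
        simp only [frobSq, Matrix.sub_apply]
        exact Finset.sum_congr rfl fun i _ => Finset.sum_congr rfl fun j _ => by ring),
      hcorner, ← frobSq_eq_trace_of_symm (hsymm _), hnorm]
    linarith
  have hid : 2 * (frobSq h + H ^ 2 / m) ^ 2 - 2 * c * (H ^ 2 * (frobSq h + H ^ 2 / m))
      = 2 * frobSq h ^ 2 - 2 * (c - 2 / (m : ℝ)) * frobSq h * H ^ 2
        - (2 / (m : ℝ)) * (c - 1 / (m : ℝ)) * H ^ 4 := by
    field_simp
    ring
  rw [hnorm]
  linarith
end

section
/- (Kato-type inequality for totally symmetric tensors.) For every totally symmetric V-valued family T indexed by triples from {1,…,m}, one has Σ_{i,j,k} ‖T(i,j,k)‖² ≥ (3/(m+2)) Σ_i ‖Σ_j T(i,j,j)‖². This is the pointwise inequality |∇A|² ≥ (3/(m+2))|∇H|² for a totally symmetric third-order tensor and its trace. -/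
/-!
The gap in the inequality is the squared norm of the trace-free part of `T`. Writing `H` for the
trace of `T` and `traceTensor H` for the symmetrization `δ_jk H_i + δ_ik H_j + δ_ij H_k`, the trace
of `traceTensor H` is `(m + 2) H`, so `T - (m + 2)⁻¹ • traceTensor H` is trace-free. By
`sum_inner_traceTensor`, pairing a totally symmetric tensor with `traceTensor H` gives three times
the pairing of its trace with `H`; used for `T` and for `traceTensor H` itself, this evaluates the
expansion of `0 ≤ ‖T - (m + 2)⁻¹ • traceTensor H‖²` and yields the claim.
-/

open Finset

/-- The totally symmetric tensor `δ_jk H_i + δ_ik H_j + δ_ij H_k` built from a vector `H`. -/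
def traceTensor {V : Type*} [AddCommMonoid V] {m : ℕ} (H : Fin m → V) (i j k : Fin m) : V :=
  (if j = k then H i else 0) + (if i = k then H j else 0) + (if i = j then H k else 0)

/-- The map `traceTensor` is, up to the factor `3`, adjoint to taking the trace on totally
symmetric tensors: each of its three summands contracts a different pair of indices of `S`. -/
lemma sum_inner_traceTensor {V : Type*} [NormedAddCommGroup V] [InnerProductSpace ℝ V]
    {m : ℕ} (S : Fin m → Fin m → Fin m → V) (H : Fin m → V)
    (h₁ : ∀ i j k, S i j k = S j i k) (h₂ : ∀ i j k, S i j k = S i k j) :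
    ∑ i, ∑ j, ∑ k, inner ℝ (S i j k) (traceTensor H i j k)
      = 3 * ∑ i, inner ℝ (∑ j, S i j j) (H i) := by
  have e1 : ∑ i, ∑ j, ∑ k, inner ℝ (S i j k) (if j = k then H i else 0)
      = ∑ i, inner ℝ (∑ j, S i j j) (H i) := by
    simp [apply_ite, sum_inner]
  have e2 : ∑ i, ∑ j, ∑ k, inner ℝ (S i j k) (if i = k then H j else 0)
      = ∑ i, inner ℝ (∑ j, S i j j) (H i) := by
    rw [← e1, sum_comm]
    simp only [h₁]
  have e3 : ∑ i, ∑ j, ∑ k, inner ℝ (S i j k) (if i = j then H k else 0)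
      = ∑ i, inner ℝ (∑ j, S i j j) (H i) := by
    rw [← e2]
    refine sum_congr rfl fun i _ => ?_
    rw [sum_comm]
    exact sum_congr rfl fun j _ => sum_congr rfl fun k _ => by rw [h₂]
  simp only [traceTensor, inner_add_right, sum_add_distrib, e1, e2, e3]
  ring

lemma trace_traceTensor {V : Type*} [AddCommGroup V] [Module ℝ V] {m : ℕ}
    (H : Fin m → V) (i : Fin m) :
    ∑ j, traceTensor H i j j = ((m : ℝ) + 2) • H i := by
  simp only [traceTensor, sum_add_distrib, if_true, sum_const, card_univ, Fintype.card_fin,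
    sum_ite_eq, mem_univ, add_smul, two_smul, Nat.cast_smul_eq_nsmul]
  abel

/-- **Kato-type inequality for totally symmetric tensors.** For a totally symmetric
`V`-valued tensor `T` with three indices in `{1,…,m}`, one has
`Σ_{i,j,k} ‖T(i,j,k)‖² ≥ (3/(m+2)) Σ_i ‖Σ_j T(i,j,j)‖²`; this is the pointwise
inequality `|∇A|² ≥ (3/(m+2))|∇H|²`. -/
theorem kato_type_inequality
    {V : Type*} [NormedAddCommGroup V] [InnerProductSpace ℝ V]
    (m : ℕ) (hm : 1 ≤ m)
    (T : Fin m → Fin m → Fin m → V)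
    (hsymm₁ : ∀ i j k, T i j k = T j i k)
    (hsymm₂ : ∀ i j k, T i j k = T i k j) :
    (∑ i, ∑ j, ∑ k, ‖T i j k‖ ^ 2)
      ≥ (3 / ((m : ℝ) + 2)) * ∑ i, ‖∑ j, T i j j‖ ^ 2 := by
  set H : Fin m → V := fun i => ∑ j, T i j j with hH
  have hTB := sum_inner_traceTensor T H hsymm₁ hsymm₂
  have hBB := sum_inner_traceTensor (traceTensor H) H
    (fun i j k => by simp only [traceTensor, eq_comm (a := j) (b := i)]; abel)
    (fun i j k => by simp only [traceTensor, eq_comm (a := k) (b := j)]; abel)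
  simp only [trace_traceTensor, real_inner_smul_left, real_inner_self_eq_norm_sq,
    ← mul_sum] at hBB
  change _ = 3 * ∑ i, inner ℝ (H i) (H i) at hTB
  simp only [real_inner_self_eq_norm_sq] at hTB
  change _ ≥ (3 / ((m : ℝ) + 2)) * ∑ i, ‖H i‖ ^ 2
  have hpos : (0 : ℝ) ≤ ∑ i, ∑ j, ∑ k, ‖T i j k - ((m : ℝ) + 2)⁻¹ • traceTensor H i j k‖ ^ 2 := by
    positivity
  have hexp : ∀ i j k, ‖T i j k - ((m : ℝ) + 2)⁻¹ • traceTensor H i j k‖ ^ 2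
      = ‖T i j k‖ ^ 2 - 2 * ((m : ℝ) + 2)⁻¹ * inner ℝ (T i j k) (traceTensor H i j k)
        + ((m : ℝ) + 2)⁻¹ ^ 2 * ‖traceTensor H i j k‖ ^ 2 := by
    intro i j k
    rw [norm_sub_sq_real, real_inner_smul_right, norm_smul, mul_pow, Real.norm_eq_abs, sq_abs]
    ring
  simp only [hexp, sum_add_distrib, sum_sub_distrib, ← mul_sum, hTB, hBB] at hpos
  have hm2 : (m : ℝ) + 2 ≠ 0 := by positivity
  have hcoeff : 2 * ((m : ℝ) + 2)⁻¹ * (3 * ∑ i, ‖H i‖ ^ 2)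
      - ((m : ℝ) + 2)⁻¹ ^ 2 * (3 * (((m : ℝ) + 2) * ∑ i, ‖H i‖ ^ 2))
      = (3 / ((m : ℝ) + 2)) * ∑ i, ‖H i‖ ^ 2 := by
    field_simp
    ring
  linarith
end
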